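/- Let d ≥ 1 and 0 < α < 1. Let k : ℝ^d ∖ {0} → ℝ be smooth away from the origin, positively homogeneous of degree −d, with zero mean on spheres centered at the origin, and let η ∈ C^{1+α}(ℝ^d; ℝ^d). Define the kernel K(x,y) = (η(x) − η(y)) · (∇k)(x − y) for x ≠ y, and the operator (Tf)(x) = lim_{ε→0} ∫_{|x−y|>ε} K(x,y) f(y) dy, defined for smooth compactly supported f. Then T is bounded on L²(ℝ^d): there is a constant C depending only on k, α, d such that ‖Tf‖_{L²(ℝ^d)} ≤ C ‖η‖_{C^{1+α}(ℝ^d)} ‖f‖_{L²(ℝ^d)}. -/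

import Mathlib

open MeasureTheory Real Set Filter Topology

noncomputable section

/-- `ℝ^d` (with the sup norm). -/
abbrev Euc (d : ℕ) : Type := Fin d → ℝ

/-- `d × d` real matrices (with the sup norm). -/
abbrev Mat (d : ℕ) : Type := Fin d → Fin d → ℝ

/-- `f` belongs to `C^α(ℝ^d)` with (both components of the) norm bounded by `M`. -/
def InCa {d : ℕ} {F : Type*} [NormedAddCommGroup F] (α M : ℝ) (f : Euc d → F) : Prop :=
  (∀ x, ‖f x‖ ≤ M) ∧ ∀ x y, ‖f x - f y‖ ≤ M * ‖x - y‖ ^ α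

/-- `f` belongs to `C^{α,p} = C^α(ℝ^d) ∩ L^p(ℝ^d)` with norm bounded by `M`. -/
def InCap {d : ℕ} {F : Type*} [NormedAddCommGroup F] (α p M : ℝ) (f : Euc d → F) : Prop :=
  InCa α M f ∧ eLpNorm f (ENNReal.ofReal p) volume ≤ ENNReal.ofReal M

/-- `f` belongs to `C^{1+α}(ℝ^d)` with norm bounded by `M`. -/
def InC1a {d : ℕ} {F : Type*} [NormedAddCommGroup F] [NormedSpace ℝ F] (α M : ℝ)
    (f : Euc d → F) : Prop :=
  Differentiable ℝ f ∧ (∀ x, ‖f x‖ ≤ M) ∧ InCa α M (fderiv ℝ f)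

/-- `f` belongs to `C^{1+α,p} = C^{1+α}(ℝ^d) ∩ W^{1,p}(ℝ^d)` with norm bounded by `M`. -/
def InC1ap {d : ℕ} {F : Type*} [NormedAddCommGroup F] [NormedSpace ℝ F] (α p M : ℝ)
    (f : Euc d → F) : Prop :=
  Differentiable ℝ f ∧ (∀ x, ‖f x‖ ≤ M) ∧ InCap α p M (fderiv ℝ f) ∧
    eLpNorm f (ENNReal.ofReal p) volume ≤ ENNReal.ofReal M

/-- The heat kernel `g_t`. -/
def heatKer (d : ℕ) (t : ℝ) (x : Euc d) : ℝ :=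
  (4 * π * t) ^ (-(d : ℝ) / 2) * Real.exp (-(∑ i, x i ^ 2) / (4 * t))

/-- Convolution with the heat kernel. -/
def heatConv {d : ℕ} {F : Type*} [NormedAddCommGroup F] [NormedSpace ℝ F] [CompleteSpace F]
    (t : ℝ) (f : Euc d → F) (x : Euc d) : F :=
  ∫ y : Euc d, heatKer d t (x - y) • f y

/-- `𝕃(f)(t) = e^{tΔ} f` (with `e^{0Δ} = Id`). -/
def opL {d : ℕ} {F : Type*} [NormedAddCommGroup F] [NormedSpace ℝ F] [CompleteSpace F]
    (f : Euc d → F) (t : ℝ) : Euc d → F :=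
  if t = 0 then f else heatConv t f

/-- The kernel of `e^{tΔ}ℍ`, `ℍ = I + R ⊗ R` the Leray projector: the inverse Fourier
transform of the (real, even, integrable for `t > 0`) symbol
`(δ_{mn} - ξ_mξ_n/|ξ|²) e^{-4π²t|ξ|²}`. -/
def lerayHeatKer (d : ℕ) (t : ℝ) (x : Euc d) (m n : Fin d) : ℝ :=
  ∫ ξ : Euc d, ((if m = n then (1 : ℝ) else 0) - ξ m * ξ n / (∑ i, ξ i ^ 2)) *
    Real.exp (-(4 * π ^ 2) * t * (∑ i, ξ i ^ 2)) * Real.cos (2 * π * ∑ i, x i * ξ i)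

/-- `div σ` for a matrix-valued field, `(div σ)_n = ∑_j ∂_j σ_{jn}`. -/
def divMat {d : ℕ} (σ : Euc d → Mat d) (y : Euc d) (n : Fin d) : ℝ :=
  ∑ j, fderiv ℝ (fun z => σ z j n) y (Pi.single j 1)

/-- `div u` for a vector field. -/
def divVec {d : ℕ} (u : Euc d → Euc d) (x : Euc d) : ℝ :=
  ∑ j, fderiv ℝ u x (Pi.single j 1) j

/-- `(∇u)_{mn} = ∂_n u_m`, as a matrix. -/
def gradMat {d : ℕ} (u : Euc d → Euc d) (x : Euc d) : Mat d :=
  fun m n => fderiv ℝ u x (Pi.single n 1) m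

/-- `𝕌(σ)(t) = ∫₀ᵗ e^{(t-s)Δ} ℍ div σ(s) ds`. -/
def opU {d : ℕ} (σ : ℝ → Euc d → Mat d) (t : ℝ) (x : Euc d) : Euc d := fun m =>
  ∫ s in (0 : ℝ)..t, ∫ y : Euc d, ∑ n, lerayHeatKer d (t - s) (x - y) m n * divMat (σ s) y n

/-- `𝔾(σ)(t) = ∫₀ᵗ e^{(t-s)Δ} ∇ℍ div σ(s) ds`. -/
def opG {d : ℕ} (σ : ℝ → Euc d → Mat d) (t : ℝ) (x : Euc d) : Mat d := fun m j =>
  ∫ s in (0 : ℝ)..t, ∫ y : Euc d, ∑ n,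
    fderiv ℝ (fun z => lerayHeatKer d (t - s) z m n) (x - y) (Pi.single j 1) * divMat (σ s) y n

/-- Sup norm functional. -/
def supN {X : Type*} {F : Type*} [NormedAddCommGroup F] (f : X → F) : ℝ := ⨆ x, ‖f x‖

/-- Hölder seminorm functional. -/
def holN {d : ℕ} {F : Type*} [NormedAddCommGroup F] (α : ℝ) (f : Euc d → F) : ℝ :=
  ⨆ q : Euc d × Euc d, ‖f q.1 - f q.2‖ / ‖q.1 - q.2‖ ^ α

/-- The `C^{α,p}` norm functional. -/
def capN {d : ℕ} {F : Type*} [NormedAddCommGroup F] (α p : ℝ) (f : Euc d → F) : ℝ :=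
  supN f + holN α f + (eLpNorm f (ENNReal.ofReal p) volume).toReal

/-- The `C^{1+α,p}` norm functional. -/
def c1apN {d : ℕ} {F : Type*} [NormedAddCommGroup F] [NormedSpace ℝ F] (α p : ℝ)
    (f : Euc d → F) : ℝ :=
  supN f + capN α p (fderiv ℝ f) + (eLpNorm f (ENNReal.ofReal p) volume).toReal

/-- `L^∞(0,T;Y)` norm of a path, w.r.t. a norm functional `N` on `Y`. -/
def linfN {Y : Type*} (T : ℝ) (N : Y → ℝ) (f : ℝ → Y) : ℝ :=
  ⨆ t : Icc (0 : ℝ) T, N (f (t : ℝ))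

/-- `C^β(0,T;Y)` norm of a path, w.r.t. a norm functional `N` on `Y`. -/
def cbN {Y : Type*} [Sub Y] (T β : ℝ) (N : Y → ℝ) (f : ℝ → Y) : ℝ :=
  linfN T N f +
    ⨆ q : Icc (0 : ℝ) T × Icc (0 : ℝ) T,
      N (f (q.1 : ℝ) - f (q.2 : ℝ)) / |(q.1 : ℝ) - (q.2 : ℝ)| ^ β

/-- The (classical, principal value) convolution operator with kernel `k`. -/
def pvConv {d : ℕ} {F : Type*} [NormedAddCommGroup F] [NormedSpace ℝ F] [CompleteSpace F]
    (k : Euc d → ℝ) (f : Euc d → F) (x : Euc d) : F :=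
  limUnder (𝓝[>] (0 : ℝ)) fun ε => ∫ y in {y : Euc d | ε < ‖x - y‖}, k (x - y) • f y

/-- The (notional) spatial inverse of a flow map. -/
def invX {d : ℕ} (X : ℝ → Euc d → Euc d) (s : ℝ) : Euc d → Euc d := Function.invFun (X s)

/-- The Lagrangian nonlinearity `𝒰(X,τ) = 𝕃(u₀)∘X + 𝕌(τ∘X⁻¹)∘X`. -/
def calU {d : ℕ} (u₀ : Euc d → Euc d) (X : ℝ → Euc d → Euc d) (τ : ℝ → Euc d → Mat d)
    (t : ℝ) (a : Euc d) : Euc d :=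
  opL u₀ t (X t a) + opU (fun s y => τ s (invX X s y)) t (X t a)

/-- The Lagrangian velocity gradient `g = 𝕃(∇u₀)∘X + 𝔾(τ∘X⁻¹)∘X`. -/
def lagG {d : ℕ} (u₀ : Euc d → Euc d) (X : ℝ → Euc d → Euc d) (τ : ℝ → Euc d → Mat d)
    (t : ℝ) (a : Euc d) : Mat d :=
  opL (gradMat u₀) t (X t a) + opG (fun s y => τ s (invX X s y)) t (X t a)

/-- The Lagrangian nonlinearity `𝒯(X,τ) = F(g,τ)`. -/
def calT {d : ℕ} (F : Mat d → Mat d → Mat d) (u₀ : Euc d → Euc d) (X : ℝ → Euc d → Euc d)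
    (τ : ℝ → Euc d → Mat d) (t : ℝ) (a : Euc d) : Mat d :=
  F (lagG u₀ X τ t a) (τ t a)

/-- `v ⊗ v`. -/
def outer {d : ℕ} (w : Euc d) : Mat d := fun m n => w m * w n

/-- `𝕌(∇w)` for a time dependent matrix field `w`, assembled as a matrix. -/
def opUgrad {d : ℕ} (w : ℝ → Euc d → Mat d) (t : ℝ) (x : Euc d) : Mat d := fun m j =>
  opU (fun s y => fderiv ℝ (w s) y (Pi.single j 1)) t x m

/-- The Navier–Stokes Lagrangian nonlinearity
`𝒱(X,τ,v) = 𝕃(u₀)∘X + 𝕌(τ∘X⁻¹)∘X − 𝕌((v⊗v)∘X⁻¹)∘X`. -/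
def calV {d : ℕ} (u₀ : Euc d → Euc d) (X : ℝ → Euc d → Euc d) (τ : ℝ → Euc d → Mat d)
    (v : ℝ → Euc d → Euc d) (t : ℝ) (a : Euc d) : Euc d :=
  calU u₀ X τ t a - opU (fun s y => outer (v s (invX X s y))) t (X t a)

/-- The Navier–Stokes Lagrangian velocity gradient
`g = 𝕃(∇u₀)∘X + 𝔾(τ∘X⁻¹)∘X − 𝕌(∇((v⊗v)∘X⁻¹))∘X`. -/
def lagGns {d : ℕ} (u₀ : Euc d → Euc d) (X : ℝ → Euc d → Euc d) (τ : ℝ → Euc d → Mat d)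
    (v : ℝ → Euc d → Euc d) (t : ℝ) (a : Euc d) : Mat d :=
  lagG u₀ X τ t a - opUgrad (fun s y => outer (v s (invX X s y))) t (X t a)

/-- The Navier–Stokes Lagrangian nonlinearity `𝒯(X,τ,v) = F(g,τ)`. -/
def calTns {d : ℕ} (F : Mat d → Mat d → Mat d) (u₀ : Euc d → Euc d) (X : ℝ → Euc d → Euc d)
    (τ : ℝ → Euc d → Mat d) (v : ℝ → Euc d → Euc d) (t : ℝ) (a : Euc d) : Mat d :=
  F (lagGns u₀ X τ v t a) (τ t a)

/-- The space–time commutator `[η·∇, 𝔾](σ)`. -/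
def commG {d : ℕ} (η : ℝ → Euc d → Euc d) (σ : ℝ → Euc d → Mat d) (t : ℝ) (x : Euc d) :
    Mat d :=
  fderiv ℝ (opG σ t) x (η t x) - opG (fun s y => fderiv ℝ (σ s) y (η s y)) t x

/-- The space–time commutator `[η·∇, 𝕌](σ)`. -/
def commU {d : ℕ} (η : ℝ → Euc d → Euc d) (σ : ℝ → Euc d → Mat d) (t : ℝ) (x : Euc d) :
    Euc d :=
  fderiv ℝ (opU σ t) x (η t x) - opU (fun s y => fderiv ℝ (σ s) y (η s y)) t x
/-!
Near the diagonal replace `η x - η y` by `∇η(x) (x - y)`. The error is at most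
`‖η‖_{C^{1+α}} ‖x - y‖ ^ (1 + α)`, so together with the part of the kernel off the diagonal, which
is `O(‖x - y‖ ^ (-d - 1))`, it has an integrable convolution majorant and is bounded on `L²` by
Young's inequality. What remains is `∑ i j, ∂_j η_i(x) z_j ∂_i k(z)` with `z = x - y`. The function
`z_j ∂_i k = ∂_i (z_j k) - δ_ij k` is homogeneous of degree `-d` with zero mean, because the
derivative of a function homogeneous of degree `1 - d` has zero mean over annuli.

A homogeneous kernel with zero mean, truncated to `2^{-N} < ‖z‖ ≤ 1`, is a sum of `N` dyadic
dilates of its restriction `g` to one annulus. Since `|𝓕 g(ξ)| ≲ min (|ξ|, 1 / |ξ|)`, the Fourier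
transforms of the dilates sum to a function bounded independently of `N`. Fatou's lemma passes to
the limit.
-/

-- The sum telescopes, since `min x x⁻¹ ≤ 6 (φ x - φ (x / 2))` with `φ x = x / (1 + x)`.
theorem sum_min_div_two_pow_inv_le (N : ℕ) {t : ℝ} (ht : 0 ≤ t) :
    ∑ j ∈ Finset.range N, min (t / 2 ^ j) (t / 2 ^ j)⁻¹ ≤ 6 := by
  have min_le : ∀ x : ℝ, 0 ≤ x → min x x⁻¹ ≤ 6 * (x / (1 + x) - x / 2 / (1 + x / 2)) := by
    intro x hx
    rcases hx.eq_or_lt with rfl | hx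
    · simp
    have hφ : 6 * (x / (1 + x) - x / 2 / (1 + x / 2)) = 6 * x / ((1 + x) * (2 + x)) := by
      field_simp
      ring
    rw [hφ, le_div_iff₀ (by positivity)]
    rcases le_total x 1 with h | h
    · calc min x x⁻¹ * ((1 + x) * (2 + x)) ≤ x * ((1 + 1) * (2 + 1)) := by
            gcongr; exact min_le_left _ _
        _ = 6 * x := by ring
    · calc min x x⁻¹ * ((1 + x) * (2 + x)) ≤ x⁻¹ * ((1 + x) * (2 + x)) := by
            gcongr; exact min_le_right _ _
        _ ≤ 6 * x := by
            rw [inv_mul_le_iff₀ hx]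
            nlinarith
  calc ∑ j ∈ Finset.range N, min (t / 2 ^ j) (t / 2 ^ j)⁻¹
      ≤ ∑ j ∈ Finset.range N, 6 * (t / 2 ^ j / (1 + t / 2 ^ j)
          - t / 2 ^ (j + 1) / (1 + t / 2 ^ (j + 1))) := by
        refine Finset.sum_le_sum fun j _ => ?_
        simpa only [pow_succ, div_mul_eq_div_div] using min_le (t / 2 ^ j) (by positivity)
    _ = 6 * (t / (1 + t) - t / 2 ^ N / (1 + t / 2 ^ N)) := by
        rw [← Finset.mul_sum, Finset.sum_range_sub', pow_zero, div_one]
    _ ≤ 6 := by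
        have h1 : t / (1 + t) ≤ 1 := div_le_one_of_le₀ (by linarith) (by positivity)
        have h2 : 0 ≤ t / 2 ^ N / (1 + t / 2 ^ N) := by positivity
        linarith

section SchurTest

open scoped ENNReal

variable {X Y : Type*} [MeasurableSpace X] [MeasurableSpace Y] {μ : Measure X} {ν : Measure Y}
  {p q : ℝ}

theorem lintegral_mul_rpow_le_of_lintegral_le (hpq : p.HolderConjugate q) {k f : Y → ℝ≥0∞}
    (hk : Measurable k) (hf : Measurable f) {A : ℝ≥0∞} (hA : ∫⁻ y, k y ∂ν ≤ A) :
    (∫⁻ y, k y * f y ∂ν) ^ p ≤ A ^ (p / q) * ∫⁻ y, k y * f y ^ p ∂ν := by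
  have hp := hpq.pos
  have hq := hpq.symm.pos
  have root_rpow : ∀ (r : ℝ), 0 < r → ∀ a : ℝ≥0∞, (a ^ r⁻¹) ^ r = a := fun r hr a => by
    rw [← ENNReal.rpow_mul, inv_mul_cancel₀ hr.ne', ENNReal.rpow_one]
  have split : ∀ a : ℝ≥0∞, a ^ q⁻¹ * a ^ p⁻¹ = a := fun a => by
    rw [← ENNReal.rpow_add_of_nonneg _ _ (by positivity) (by positivity),
      hpq.symm.inv_add_inv_eq_one, ENNReal.rpow_one]
  have holder : ∫⁻ y, k y * f y ∂ν ≤ A ^ q⁻¹ * (∫⁻ y, k y * f y ^ p ∂ν) ^ p⁻¹ := by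
    have h := ENNReal.lintegral_mul_le_Lp_mul_Lq ν hpq.symm
      (f := fun y => k y ^ q⁻¹) (g := fun y => k y ^ p⁻¹ * f y)
      (hk.pow_const _).aemeasurable ((hk.pow_const _).mul hf).aemeasurable
    simp only [Pi.mul_apply, ← mul_assoc, split, ENNReal.mul_rpow_of_nonneg _ _ hp.le,
      root_rpow q hq, root_rpow p hp, one_div] at h
    exact h.trans (by gcongr)
  calc (∫⁻ y, k y * f y ∂ν) ^ p
      ≤ (A ^ q⁻¹ * (∫⁻ y, k y * f y ^ p ∂ν) ^ p⁻¹) ^ p := by gcongr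
    _ = A ^ (p / q) * ∫⁻ y, k y * f y ^ p ∂ν := by
        rw [ENNReal.mul_rpow_of_nonneg _ _ hp.le, root_rpow p hp, ← ENNReal.rpow_mul,
          inv_mul_eq_div]

theorem lintegral_rpow_lintegral_mul_le_of_schur [SFinite μ] [SFinite ν]
    (hpq : p.HolderConjugate q) {K : X → Y → ℝ≥0∞} (hK : Measurable (Function.uncurry K))
    {f : Y → ℝ≥0∞} (hf : Measurable f) {A B : ℝ≥0∞} (hA : ∀ x, ∫⁻ y, K x y ∂ν ≤ A)
    (hB : ∀ y, ∫⁻ x, K x y ∂μ ≤ B) :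
    ∫⁻ x, (∫⁻ y, K x y * f y ∂ν) ^ p ∂μ ≤ A ^ (p / q) * (B * ∫⁻ y, f y ^ p ∂ν) := by
  have hKf : Measurable (Function.uncurry fun x y => K x y * f y ^ p) :=
    hK.mul ((hf.comp measurable_snd).pow_const p)
  calc ∫⁻ x, (∫⁻ y, K x y * f y ∂ν) ^ p ∂μ
      ≤ ∫⁻ x, A ^ (p / q) * ∫⁻ y, K x y * f y ^ p ∂ν ∂μ :=
        lintegral_mono fun x =>
          lintegral_mul_rpow_le_of_lintegral_le hpq hK.of_uncurry_left hf (hA x)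
    _ = A ^ (p / q) * ∫⁻ y, ∫⁻ x, K x y * f y ^ p ∂μ ∂ν := by
        rw [lintegral_const_mul _ hKf.lintegral_prod_right,
          lintegral_lintegral_swap hKf.aemeasurable]
    _ ≤ A ^ (p / q) * ∫⁻ y, B * f y ^ p ∂ν := by
        gcongr with y
        rw [lintegral_mul_const _ hK.of_uncurry_right]
        gcongr
        exact hB y
    _ = A ^ (p / q) * (B * ∫⁻ y, f y ^ p ∂ν) := by
        rw [lintegral_const_mul _ (hf.pow_const p)]

theorem eLpNorm_le_of_enorm_le_lintegral_sub {G F F' : Type*} [MeasurableSpace G]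
    [AddCommGroup G] [MeasurableAdd₂ G] [MeasurableNeg G] {μ : Measure G} [SFinite μ]
    [μ.IsAddLeftInvariant] [μ.IsNegInvariant] [NormedAddCommGroup F] [NormedAddCommGroup F']
    [MeasurableSpace F] [OpensMeasurableSpace F] (hpq : p.HolderConjugate q) {g : G → ℝ≥0∞}
    (hg : Measurable g) {f : G → F} (hf : Measurable f) {u : G → F'}
    (hu : ∀ x, ‖u x‖ₑ ≤ ∫⁻ y, g (x - y) * ‖f y‖ₑ ∂μ) :
    eLpNorm u (ENNReal.ofReal p) μ ≤ (∫⁻ z, g z ∂μ) * eLpNorm f (ENNReal.ofReal p) μ := by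
  have hp := hpq.pos
  have schur := lintegral_rpow_lintegral_mul_le_of_schur (μ := μ) (ν := μ) hpq
    (K := fun x y => g (x - y)) (hg.comp measurable_sub) hf.enorm
    (fun x => (lintegral_sub_left_eq_self g x).le) (fun y => (lintegral_sub_right_eq_self g y).le)
  have root_rpow : ∀ a : ℝ≥0∞, (a ^ p) ^ (1 / p) = a := fun a => by
    rw [← ENNReal.rpow_mul, mul_one_div_cancel hp.ne', ENNReal.rpow_one]
  have exponent : ∀ a : ℝ≥0∞, a ^ (p / q) * a = a ^ p := fun a => by
    conv_lhs => rw [← ENNReal.rpow_one a, ← ENNReal.rpow_mul, one_mul,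
      ← ENNReal.rpow_add_of_nonneg _ _ (div_nonneg hp.le hpq.symm.nonneg) zero_le_one]
    rw [hpq.div_conj_eq_sub_one, sub_add_cancel]
  rw [eLpNorm_eq_lintegral_rpow_enorm_toReal (by simpa using hp) ENNReal.ofReal_ne_top,
    eLpNorm_eq_lintegral_rpow_enorm_toReal (by simpa using hp) ENNReal.ofReal_ne_top,
    ENNReal.toReal_ofReal hp.le, ← root_rpow (∫⁻ z, g z ∂μ),
    ← ENNReal.mul_rpow_of_nonneg _ _ (by positivity), ← exponent, mul_assoc]
  gcongr
  exact (lintegral_mono fun x => ENNReal.rpow_le_rpow (hu x) hp.le).trans schur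

end SchurTest

section Annulus

variable {E : Type*} [NormedAddCommGroup E]

variable (E) in
/-- The annulus `{r < ‖z‖ ≤ s}`, half-open in order to be a difference of closed balls. -/
def annulus (r s : ℝ) : Set E := {z | r < ‖z‖ ∧ ‖z‖ ≤ s}

variable {r s : ℝ}

theorem annulus_eq_closedBall_diff (r s : ℝ) :
    annulus E r s = Metric.closedBall 0 s \ Metric.closedBall 0 r := by
  ext z
  simp only [annulus, mem_ofPred_eq, Set.mem_sdiff, mem_closedBall_zero_iff, not_le, and_comm]

theorem annulus_subset_closedBall (r s : ℝ) : annulus E r s ⊆ Metric.closedBall 0 s :=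
  fun _ hz => mem_closedBall_zero_iff.2 hz.2

theorem annulus_subset_ne_zero (hr : 0 ≤ r) : annulus E r s ⊆ {z | z ≠ 0} :=
  fun _ hz => norm_pos_iff.1 (hr.trans_lt hz.1)

theorem smul_mem_annulus_iff [NormedSpace ℝ E] {c : ℝ} (hc : 0 < c) {z : E} :
    c • z ∈ annulus E r s ↔ z ∈ annulus E (r / c) (s / c) := by
  simp only [annulus, mem_ofPred_eq, norm_smul_of_nonneg hc.le, div_lt_iff₀' hc, le_div_iff₀' hc]

theorem exists_isCompact_annulus_subset [ProperSpace E] (hr : 0 < r) (s : ℝ) :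
    ∃ K, IsCompact K ∧ annulus E r s ⊆ K ∧ K ⊆ {z | z ≠ 0} := by
  refine ⟨Metric.closedBall 0 s \ Metric.ball 0 r,
    (isCompact_closedBall 0 s).diff Metric.isOpen_ball, ?_, ?_⟩
  · rw [annulus_eq_closedBall_diff]
    exact sdiff_subset_sdiff_right Metric.ball_subset_closedBall
  · rintro z hz rfl
    exact hz.2 (Metric.mem_ball_self hr)

theorem indicator_annulus_eq_sub {M : Type*} [AddGroup M] (hrs : r ≤ s) (f : E → M) :
    (annulus E r s).indicator f =
      (Metric.closedBall 0 s).indicator f - (Metric.closedBall 0 r).indicator f := by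
  rw [annulus_eq_closedBall_diff, indicator_sdiff (Metric.closedBall_subset_closedBall hrs)]

variable [MeasurableSpace E]

theorem measurableSet_annulus [BorelSpace E] (r s : ℝ) : MeasurableSet (annulus E r s) :=
  annulus_eq_closedBall_diff (E := E) r s ▸
    Metric.isClosed_closedBall.measurableSet.diff Metric.isClosed_closedBall.measurableSet

theorem measure_annulus_lt_top [ProperSpace E] {μ : Measure E} [IsFiniteMeasureOnCompacts μ]
    (r s : ℝ) : μ (annulus E r s) < ⊤ :=
  (measure_mono (annulus_subset_closedBall r s)).trans_lt measure_closedBall_lt_top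

variable [NormedSpace ℝ E] [BorelSpace E] [FiniteDimensional ℝ E] {μ : Measure E}
  [μ.IsAddHaarMeasure]

theorem measureReal_annulus_sub_le [Nontrivial E] {ρ δ : ℝ} (hρ : 0 < ρ) (hδ : 0 ≤ δ) :
    μ.real (annulus E (ρ - δ) ρ) ≤
      Module.finrank ℝ E * μ.real (Metric.closedBall (0 : E) ρ) * (δ / ρ) := by
  have hn : (1 : ℝ) ≤ Module.finrank ℝ E := by exact_mod_cast Module.finrank_pos (R := ℝ) (M := E)
  rcases le_total δ ρ with hδρ | hδρ
  · have bernoulli : 1 + Module.finrank ℝ E * -(δ / ρ) ≤ (1 + -(δ / ρ)) ^ Module.finrank ℝ E :=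
      one_add_mul_le_pow (by linarith [(div_le_one hρ).2 hδρ]) _
    have inner : μ.real (Metric.closedBall (0 : E) (ρ - δ)) =
        (1 + -(δ / ρ)) ^ Module.finrank ℝ E * μ.real (Metric.closedBall (0 : E) ρ) := by
      rw [Measure.addHaar_real_closedBall μ 0 hρ.le,
        Measure.addHaar_real_closedBall μ 0 (sub_nonneg.2 hδρ), ← mul_assoc, ← mul_pow]
      congr 2
      field_simp
      ring
    rw [annulus_eq_closedBall_diff, measureReal_sdiff
      (Metric.closedBall_subset_closedBall (by linarith)) Metric.isClosed_closedBall.measurableSet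
      measure_closedBall_lt_top.ne, inner]
    nlinarith [measureReal_nonneg (μ := μ) (s := Metric.closedBall (0 : E) ρ)]
  · calc μ.real (annulus E (ρ - δ) ρ) ≤ μ.real (Metric.closedBall (0 : E) ρ) :=
          measureReal_mono (annulus_subset_closedBall _ _) measure_closedBall_lt_top.ne
      _ ≤ Module.finrank ℝ E * μ.real (Metric.closedBall (0 : E) ρ) * (δ / ρ) := by
          rw [mul_right_comm]
          exact le_mul_of_one_le_left measureReal_nonneg
            (one_le_mul_of_one_le_of_one_le hn ((one_le_div hρ).2 hδρ))

end Annulus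

theorem exists_lipschitzOnWith_of_isCompact {E F : Type*} [NormedAddCommGroup E]
    [NormedSpace ℝ E] [NormedAddCommGroup F] [NormedSpace ℝ F] {f : E → F} {U A : Set E}
    (hU : IsOpen U) (hf : ContDiffOn ℝ 1 f U) (hA : IsCompact A) (hAU : A ⊆ U) :
    ∃ K, LipschitzOnWith K f A :=
  LocallyLipschitzOn.exists_lipschitzOnWith_of_compact hA fun _ hx =>
    let ⟨K, t, ht, hK⟩ := (hf.contDiffAt (hU.mem_nhds (hAU hx))).exists_lipschitzOnWith
    ⟨K, t, nhdsWithin_le_nhds ht, hK⟩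

section L1Lipschitz

variable {E F : Type*} [NormedAddCommGroup E] [MeasurableSpace E] [NormedAddCommGroup F]
  {μ : Measure E}

/-- An integrable `g` whose translates move at speed at most `L` in `L¹`. For the sharp cutoffs used
here this replaces smoothness: it gives the decay `‖𝓕 g ξ‖ ≲ 1 / ‖ξ‖`. -/
structure IsL1Lipschitz (μ : Measure E) (g : E → F) (L : ℝ) : Prop where
  integrable : Integrable g μ
  integral_norm_sub_le : ∀ h, ∫ z, ‖g z - g (z - h)‖ ∂μ ≤ L * ‖h‖

namespace IsL1Lipschitz

theorem mono {g : E → F} {L L' : ℝ} (hg : IsL1Lipschitz μ g L) (h : L ≤ L') :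
    IsL1Lipschitz μ g L' where
  integrable := hg.integrable
  integral_norm_sub_le x := (hg.integral_norm_sub_le x).trans (by gcongr)

theorem comp_measurePreserving {V : Type*} [NormedAddCommGroup V] [MeasurableSpace V]
    [NormedSpace ℝ V] [NormedSpace ℝ E] [BorelSpace V] [BorelSpace E] {ν : Measure V} {g : E → F}
    {L : ℝ} (hg : IsL1Lipschitz μ g L) (hL : 0 ≤ L) (T : V ≃L[ℝ] E) (hT : MeasurePreserving T ν μ) :
    IsL1Lipschitz ν (g ∘ T) (L * ‖(T : V →L[ℝ] E)‖) where
  integrable := hT.integrable_comp_of_integrable hg.integrable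
  integral_norm_sub_le h := by
    have emb : MeasurableEmbedding T := T.toHomeomorph.measurableEmbedding
    calc ∫ v, ‖(g ∘ T) v - (g ∘ T) (v - h)‖ ∂ν
        = ∫ z, ‖g z - g (z - T h)‖ ∂μ := by
          rw [← hT.integral_comp emb]
          simp only [Function.comp_apply, map_sub]
      _ ≤ L * ‖(T : V →L[ℝ] E)‖ * ‖h‖ := (hg.integral_norm_sub_le _).trans <| by
          rw [mul_assoc]
          exact mul_le_mul_of_nonneg_left ((T : V →L[ℝ] E).le_opNorm h) hL

section

variable [BorelSpace E] [μ.IsAddRightInvariant]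

theorem integrable_sub_translate {g : E → F} {L : ℝ} (hg : IsL1Lipschitz μ g L) (h : E) :
    Integrable (fun z => g z - g (z - h)) μ :=
  hg.integrable.sub (hg.integrable.comp_sub_right h)

theorem sub {g₁ g₂ : E → F} {L₁ L₂ : ℝ} (h₁ : IsL1Lipschitz μ g₁ L₁)
    (h₂ : IsL1Lipschitz μ g₂ L₂) : IsL1Lipschitz μ (g₁ - g₂) (L₁ + L₂) where
  integrable := h₁.integrable.sub h₂.integrable
  integral_norm_sub_le h := by
    calc ∫ z, ‖(g₁ - g₂) z - (g₁ - g₂) (z - h)‖ ∂μ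
        ≤ ∫ z, (‖g₁ z - g₁ (z - h)‖ + ‖g₂ z - g₂ (z - h)‖) ∂μ := by
          refine integral_mono_of_nonneg (ae_of_all _ fun _ => norm_nonneg _)
            ((h₁.integrable_sub_translate h).norm.add (h₂.integrable_sub_translate h).norm)
            (ae_of_all _ fun z => ?_)
          calc ‖(g₁ - g₂) z - (g₁ - g₂) (z - h)‖
              = ‖(g₁ z - g₁ (z - h)) - (g₂ z - g₂ (z - h))‖ := by
                rw [Pi.sub_apply, Pi.sub_apply, sub_sub_sub_comm]
            _ ≤ _ := norm_sub_le _ _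
      _ ≤ (L₁ + L₂) * ‖h‖ := by
          rw [integral_add (h₁.integrable_sub_translate h).norm
            (h₂.integrable_sub_translate h).norm, add_mul]
          exact add_le_add (h₁.integral_norm_sub_le h) (h₂.integral_norm_sub_le h)

theorem indicator_of_lipschitzOnWith [SecondCountableTopology E] {A : Set E} {W : ℝ}
    (hA : MeasurableSet A) (hW : IsL1Lipschitz μ (A.indicator (1 : E → ℝ)) W) {f : E → F}
    {K : NNReal} {S : ℝ} (hf : LipschitzOnWith K f A) (hS0 : 0 ≤ S) (hS : ∀ z ∈ A, ‖f z‖ ≤ S) :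
    IsL1Lipschitz μ (A.indicator f) (K * μ.real A + S * W) where
  integrable := by
    have hAfin : μ A < ⊤ := by
      simpa using (integrableOn_const_iff (C := (1 : ℝ))).1
        ((integrable_indicator_iff hA).1 hW.integrable)
    exact (integrable_indicator_iff hA).2 (.of_bound hAfin
      (hf.continuousOn.aestronglyMeasurable hA) S ((ae_restrict_iff' hA).2 (ae_of_all _ hS)))
  integral_norm_sub_le h := by
    have hint : Integrable (A.indicator (1 : E → ℝ)) μ := hW.integrable
    have pointwise : ∀ z, ‖A.indicator f z - A.indicator f (z - h)‖ ≤
        K * ‖h‖ * A.indicator (1 : E → ℝ) z +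
          S * ‖A.indicator (1 : E → ℝ) z - A.indicator (1 : E → ℝ) (z - h)‖ := by
      intro z
      by_cases hz : z ∈ A <;> by_cases hzh : z - h ∈ A
      · simpa [hz, hzh] using hf.norm_sub_le hz hzh
      · simpa [hz, hzh] using (hS z hz).trans (le_add_of_nonneg_left (by positivity))
      · simpa [hz, hzh] using hS _ hzh
      · simp [hz, hzh]
    calc ∫ z, ‖A.indicator f z - A.indicator f (z - h)‖ ∂μ
        ≤ ∫ z, (K * ‖h‖ * A.indicator (1 : E → ℝ) z +
            S * ‖A.indicator (1 : E → ℝ) z - A.indicator (1 : E → ℝ) (z - h)‖) ∂μ :=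
          integral_mono_of_nonneg (ae_of_all _ fun _ => norm_nonneg _)
            ((hint.const_mul _).add ((hW.integrable_sub_translate h).norm.const_mul _))
            (ae_of_all _ pointwise)
      _ = K * ‖h‖ * μ.real A +
            S * ∫ z, ‖A.indicator (1 : E → ℝ) z - A.indicator (1 : E → ℝ) (z - h)‖ ∂μ := by
          rw [integral_add (hint.const_mul _) ((hW.integrable_sub_translate h).norm.const_mul _),
            integral_const_mul, integral_const_mul, integral_indicator_one hA]
      _ ≤ (K * μ.real A + S * W) * ‖h‖ := by
          have := mul_le_mul_of_nonneg_left (hW.integral_norm_sub_le h) hS0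
          linarith

end

variable [NormedSpace ℝ E] [BorelSpace E] [FiniteDimensional ℝ E] [μ.IsAddHaarMeasure]
  [Nontrivial E]

theorem indicator_closedBall {ρ : ℝ} (hρ : 0 < ρ) :
    IsL1Lipschitz μ ((Metric.closedBall (0 : E) ρ).indicator (1 : E → ℝ))
      (2 * (Module.finrank ℝ E * μ.real (Metric.closedBall (0 : E) ρ) / ρ)) where
  integrable := (integrable_indicator_iff Metric.isClosed_closedBall.measurableSet).2
    (integrableOn_const measure_closedBall_lt_top.ne)
  integral_norm_sub_le h := by
    set B := Metric.closedBall (0 : E) ρ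
    set D := annulus E (ρ - ‖h‖) ρ
    have hD : Integrable (D.indicator (1 : E → ℝ)) μ :=
      (integrable_indicator_iff (measurableSet_annulus _ _)).2
        (integrableOn_const (measure_annulus_lt_top _ _).ne)
    have pointwise : ∀ z, ‖B.indicator (1 : E → ℝ) z - B.indicator (1 : E → ℝ) (z - h)‖ ≤
        D.indicator (1 : E → ℝ) z + D.indicator (1 : E → ℝ) (z - h) := by
      classical
      intro z
      have h₁ := norm_sub_le z h
      have h₂ := norm_le_norm_sub_add z h
      simp only [B, D, annulus, indicator_apply, mem_closedBall_zero_iff, mem_ofPred_eq,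
        Pi.one_apply]
      split_ifs <;> norm_num <;> grind
    calc ∫ z, ‖B.indicator (1 : E → ℝ) z - B.indicator (1 : E → ℝ) (z - h)‖ ∂μ
        ≤ ∫ z, (D.indicator (1 : E → ℝ) z + D.indicator (1 : E → ℝ) (z - h)) ∂μ :=
          integral_mono_of_nonneg (ae_of_all _ fun _ => norm_nonneg _)
            (hD.add (hD.comp_sub_right h)) (ae_of_all _ pointwise)
      _ = 2 * μ.real D := by
          rw [integral_add hD (hD.comp_sub_right h), integral_sub_right_eq_self _ h,
            integral_indicator_one (measurableSet_annulus _ _), two_mul]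
      _ ≤ 2 * (Module.finrank ℝ E * μ.real B * (‖h‖ / ρ)) := by
          gcongr
          exact measureReal_annulus_sub_le hρ (norm_nonneg h)
      _ = 2 * (Module.finrank ℝ E * μ.real B / ρ) * ‖h‖ := by ring

end IsL1Lipschitz

variable [NormedSpace ℝ E] [BorelSpace E] [FiniteDimensional ℝ E] [μ.IsAddHaarMeasure]
  [Nontrivial E]

theorem exists_isL1Lipschitz_indicator_annulus [NormedSpace ℝ F] {f : E → F}
    (hf : ContDiffOn ℝ 1 f {z | z ≠ 0}) {r s : ℝ} (hr : 0 < r) (hrs : r ≤ s) :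
    ∃ L, 0 ≤ L ∧ IsL1Lipschitz μ ((annulus E r s).indicator f) L := by
  obtain ⟨A, hA, hsub, hA0⟩ := exists_isCompact_annulus_subset (E := E) hr s
  obtain ⟨K, hK⟩ := exists_lipschitzOnWith_of_isCompact isOpen_ne hf hA hA0
  obtain ⟨S, hS⟩ := hA.exists_bound_of_continuousOn (hf.continuousOn.mono hA0)
  have hW := (IsL1Lipschitz.indicator_closedBall (μ := μ) (hr.trans_le hrs)).sub
    (IsL1Lipschitz.indicator_closedBall hr)
  rw [← indicator_annulus_eq_sub hrs] at hW
  have h := hW.indicator_of_lipschitzOnWith (measurableSet_annulus r s) (hK.mono hsub)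
    (le_max_right S 0) fun z hz => (hS z (hsub hz)).trans (le_max_left S 0)
  exact ⟨_, le_max_right _ 0, h.mono (le_max_left _ _)⟩

end L1Lipschitz

section FourierBounds

open scoped FourierTransform Convolution ContDiff

variable {V : Type*} [NormedAddCommGroup V] [InnerProductSpace ℝ V] [FiniteDimensional ℝ V]
  [MeasurableSpace V] [BorelSpace V]

section

variable {F : Type*} [NormedAddCommGroup F] [NormedSpace ℂ F] {g : V → F}

theorem IsL1Lipschitz.norm_fourier_le {L : ℝ} (hg : IsL1Lipschitz volume g L) {ξ : V}
    (hξ : ξ ≠ 0) : ‖𝓕 g ξ‖ ≤ L * ‖ξ‖⁻¹ := by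
  set h : V := -((1 / (2 * ‖ξ‖ ^ 2)) • ξ)
  have norm_h : ‖h‖ = ‖ξ‖⁻¹ / 2 := by
    have := norm_pos_iff.2 hξ
    rw [norm_neg, norm_smul_of_nonneg (by positivity)]
    field_simp
  have half_period : 𝓕 g ξ = (1 / (2 : ℂ)) • ∫ v, 𝐞 (-inner ℝ v ξ) • (g v - g (v - h)) := by
    rw [fourier_eq, fourierIntegral_eq_half_sub_half_period_translate hξ hg.integrable]
    simp only [h, sub_neg_eq_add]
  have bound : ‖𝓕 g ξ‖ ≤ 1 / 2 * (L * ‖h‖) := by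
    rw [half_period, norm_smul]
    gcongr
    · simp
    · refine (norm_integral_le_integral_norm _).trans ?_
      simpa only [Circle.norm_smul] using hg.integral_norm_sub_le h
  have := (integral_nonneg fun _ => norm_nonneg _).trans (hg.integral_norm_sub_le h)
  rw [norm_h] at bound this
  linarith

theorem norm_fourier_le_of_integral_eq_zero (hg : Integrable g)
    (hg1 : Integrable fun v => ‖v‖ * ‖g v‖) (h0 : ∫ v, g v = 0) (ξ : V) :
    ‖𝓕 g ξ‖ ≤ 2 * π * (∫ v, ‖v‖ * ‖g v‖) * ‖ξ‖ := by
  have char_sub_one : ∀ v : V, ‖(𝐞 (-inner ℝ v ξ) : ℂ) - 1‖ ≤ 2 * π * ‖v‖ * ‖ξ‖ := by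
    intro v
    rw [fourierChar_apply, mul_comm _ Complex.I]
    refine norm_exp_I_mul_ofReal_sub_one_le.trans ?_
    rw [norm_mul, norm_neg, norm_of_nonneg two_pi_pos.le, mul_assoc (2 * π)]
    gcongr
    exact norm_inner_le_norm (𝕜 := ℝ) v ξ
  have cancel : 𝓕 g ξ = ∫ v, ((𝐞 (-inner ℝ v ξ) : ℂ) - 1) • g v := by
    have := integral_sub ((fourierIntegral_convergent_iff ξ).2 hg) hg
    rw [h0, sub_zero, ← fourier_eq] at this
    simpa only [sub_smul, one_smul, Circle.smul_def] using this.symm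
  calc ‖𝓕 g ξ‖ ≤ ∫ v, 2 * π * ‖ξ‖ * (‖v‖ * ‖g v‖) := by
        rw [cancel]
        refine norm_integral_le_of_norm_le (hg1.const_mul _) (ae_of_all _ fun v => ?_)
        rw [norm_smul]
        calc _ ≤ 2 * π * ‖v‖ * ‖ξ‖ * ‖g v‖ := by gcongr; exact char_sub_one v
          _ = _ := by ring
    _ = 2 * π * (∫ v, ‖v‖ * ‖g v‖) * ‖ξ‖ := by rw [integral_const_mul]; ring

theorem fourier_pow_smul_comp_smul (g : V → F) {c : ℝ} (hc : 0 < c) (ξ : V) :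
    𝓕 (fun v => c ^ Module.finrank ℝ V • g (c • v)) ξ = 𝓕 g (c⁻¹ • ξ) := by
  have dilate := Measure.integral_comp_smul_of_nonneg volume
    (fun v => 𝐞 (-inner ℝ v (c⁻¹ • ξ)) • g v) c (hR := hc.le)
  simp only [inner_smul_left, inner_smul_right, RCLike.conj_to_real,
    inv_mul_cancel_left₀ hc.ne'] at dilate
  have hcn : c ^ Module.finrank ℝ V ≠ 0 := by positivity
  simp only [fourier_eq, inner_smul_right, smul_comm _ (c ^ Module.finrank ℝ V), integral_smul,
    dilate, smul_inv_smul₀ hcn]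

end

theorem eLpNorm_convolution_le_of_norm_fourier_le {g f : V → ℂ} (hg : Integrable g)
    (hgc : HasCompactSupport g) {C : ℝ} (hC : ∀ ξ, ‖𝓕 g ξ‖ ≤ C) (hf : ContDiff ℝ ∞ f)
    (hfc : HasCompactSupport f) :
    eLpNorm (g ⋆[ContinuousLinearMap.mul ℂ ℂ] f) 2 volume ≤
      ENNReal.ofReal C * eLpNorm f 2 volume := by
  have hC0 : 0 ≤ C := (norm_nonneg _).trans (hC 0)
  have hgf : ContDiff ℝ ∞ (g ⋆[ContinuousLinearMap.mul ℂ ℂ] f) :=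
    hfc.contDiff_convolution_right (ContinuousLinearMap.mul ℝ ℂ) hg.locallyIntegrable hf
  let F : SchwartzMap V ℂ := hfc.toSchwartzMap hf
  let G : SchwartzMap V ℂ :=
    (hgc.convolution (ContinuousLinearMap.mul ℂ ℂ) hfc).toSchwartzMap hgf
  have integrable_sq : ∀ H : SchwartzMap V ℂ, Integrable fun x => ‖H x‖ ^ 2 := fun H =>
    (H.memLp 2).integrable_norm_pow two_ne_zero
  have eLpNorm_eq : ∀ H : SchwartzMap V ℂ,
      eLpNorm H 2 volume = ENNReal.ofReal √(∫ x, ‖H x‖ ^ 2) := fun H => by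
    rw [(H.memLp 2 volume).eLpNorm_eq_integral_rpow_norm two_ne_zero ENNReal.ofNat_ne_top]
    simp [Real.sqrt_eq_rpow]
  have fourier_G : ∀ ξ, 𝓕 G ξ = 𝓕 g ξ * 𝓕 F ξ := by
    simp only [SchwartzMap.fourier_coe]
    exact fourier_mul_convolution_eq hg F.integrable
  have plancherel : ∫ x, ‖G x‖ ^ 2 ≤ C ^ 2 * ∫ x, ‖F x‖ ^ 2 := by
    rw [← F.integral_norm_sq_fourier, ← G.integral_norm_sq_fourier, ← integral_const_mul]
    refine integral_mono (integrable_sq _) ((integrable_sq _).const_mul _) fun ξ => ?_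
    simp only [fourier_G, norm_mul, mul_pow]
    gcongr
    exact hC ξ
  change eLpNorm G 2 volume ≤ ENNReal.ofReal C * eLpNorm F 2 volume
  rw [eLpNorm_eq, eLpNorm_eq, ← ENNReal.ofReal_mul hC0]
  refine ENNReal.ofReal_le_ofReal ((Real.sqrt_le_sqrt plancherel).trans_eq ?_)
  rw [Real.sqrt_mul (sq_nonneg C), Real.sqrt_sq hC0]

end FourierBounds

section L2Convolution

open scoped FourierTransform Convolution ContDiff

variable {E V : Type*} [NormedAddCommGroup E] [NormedSpace ℝ E] [MeasurableSpace E]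

/-- Convolution with `g` is bounded by `C` on `L²(μ)`, tested on smooth compactly supported
functions. -/
def L2ConvBound (μ : Measure E) (g : E → ℝ) (C : ℝ) : Prop :=
  ∀ f : E → ℝ, ContDiff ℝ ∞ f → HasCompactSupport f →
    eLpNorm (fun x => ∫ y, g (x - y) * f y ∂μ) 2 μ ≤ ENNReal.ofReal C * eLpNorm f 2 μ

namespace L2ConvBound

theorem smul_measure {μ : Measure E} {g : E → ℝ} {C : ℝ} (h : L2ConvBound μ g C) (c : NNReal) :
    L2ConvBound (c • μ) g (c * C) := by
  intro f hf hfc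
  have mul_int : (fun x => ∫ y, g (x - y) * f y ∂(c • μ)) =
      (c : ℝ) • fun x => ∫ y, g (x - y) * f y ∂μ :=
    funext fun _ => integral_smul_nnreal_measure _ c
  calc eLpNorm (fun x => ∫ y, g (x - y) * f y ∂(c • μ)) 2 (c • μ)
      = c * eLpNorm (fun x => ∫ y, g (x - y) * f y ∂μ) 2 (c • μ) := by
        rw [mul_int, eLpNorm_const_smul]
        simp
    _ ≤ c * (ENNReal.ofReal C * eLpNorm f 2 (c • μ)) := by
        rcases eq_or_ne c 0 with rfl | hc
        · simp
        · have hc' : (c : ENNReal) ≠ 0 := ENNReal.coe_ne_zero.2 hc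
          have scale : ∀ u : E → ℝ, eLpNorm u 2 (c • μ) =
              (c : ENNReal) ^ (1 / (2 : ENNReal)).toReal • eLpNorm u 2 μ :=
            fun u => eLpNorm_smul_measure_of_ne_zero hc' u 2 μ
          simp only [scale, smul_eq_mul, mul_left_comm (ENNReal.ofReal C)]
          gcongr
          exact h f hf hfc
    _ = ENNReal.ofReal (c * C) * eLpNorm f 2 (c • μ) := by
        rw [ENNReal.ofReal_mul c.coe_nonneg, ENNReal.ofReal_coe_nnreal, mul_assoc]

theorem of_comp_measurePreserving [BorelSpace E] [NormedAddCommGroup V] [NormedSpace ℝ V]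
    [MeasurableSpace V] [BorelSpace V] {μ : Measure E} {ν : Measure V} {g : E → ℝ} {C : ℝ}
    (T : V ≃L[ℝ] E) (hT : MeasurePreserving T ν μ) (h : L2ConvBound ν (g ∘ T) C) :
    L2ConvBound μ g C := by
  intro f hf hfc
  have emb : MeasurableEmbedding T := T.toHomeomorph.measurableEmbedding
  have eLpNorm_comp : ∀ u : E → ℝ, eLpNorm u 2 μ = eLpNorm (u ∘ T) 2 ν := fun u => by
    rw [← hT.map_eq, emb.eLpNorm_map_measure]
  have conv_comp : (fun x => ∫ y, g (x - y) * f y ∂μ) ∘ T =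
      fun v => ∫ w, (g ∘ T) (v - w) * (f ∘ T) w ∂ν := by
    funext v
    simp only [Function.comp_apply, map_sub, ← hT.integral_comp emb]
  rw [eLpNorm_comp, eLpNorm_comp, conv_comp]
  exact h (f ∘ T) (hf.comp T.contDiff) (hfc.comp_homeomorph T.toHomeomorph)

theorem of_norm_fourier_le [NormedAddCommGroup V] [InnerProductSpace ℝ V] [FiniteDimensional ℝ V]
    [MeasurableSpace V] [BorelSpace V] {g : V → ℝ} (hg : Integrable g)
    (hgc : HasCompactSupport g) {C : ℝ} (hC : ∀ ξ, ‖𝓕 (fun v => (g v : ℂ)) ξ‖ ≤ C) :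
    L2ConvBound volume g C := by
  intro f hf hfc
  have key := eLpNorm_convolution_le_of_norm_fourier_le (g := fun v => (g v : ℂ))
    (f := fun v => (f v : ℂ)) hg.ofReal (hgc.comp_left Complex.ofReal_zero) hC
    (Complex.ofRealCLM.contDiff.comp hf) (hfc.comp_left Complex.ofReal_zero)
  have conv_eq : ((fun v => (g v : ℂ)) ⋆[ContinuousLinearMap.mul ℂ ℂ] fun v => (f v : ℂ)) =
      fun x => ((∫ y, g (x - y) * f y : ℝ) : ℂ) := by
    funext x
    rw [convolution_eq_swap, ← integral_complex_ofReal]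
    simp only [ContinuousLinearMap.mul_apply', Complex.ofReal_mul]
  have eLpNorm_ofReal : ∀ u : V → ℝ, eLpNorm (fun x => (u x : ℂ)) 2 volume = eLpNorm u 2 volume :=
    fun u => eLpNorm_congr_norm_ae (ae_of_all _ fun x => Complex.norm_real (u x))
  rwa [conv_eq, eLpNorm_ofReal, eLpNorm_ofReal] at key

end L2ConvBound

end L2Convolution

section DyadicSum

open scoped FourierTransform

variable {E F : Type*} [NormedAddCommGroup E] [NormedSpace ℝ E] [NormedAddCommGroup F]
  [NormedSpace ℝ F]

/-- The sum `∑_{j < N} 2^{jn} g(2^j z)`, `n = dim E`, of `N` dyadic dilates of `g` with the same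
integral as `g`. -/
def dyadicSum (g : E → F) (N : ℕ) (z : E) : F :=
  ∑ j ∈ Finset.range N, ((2 : ℝ) ^ j) ^ Module.finrank ℝ E • g ((2 : ℝ) ^ j • z)

theorem dyadicSum_comp {V : Type*} [NormedAddCommGroup V] [NormedSpace ℝ V] (g : E → F) (N : ℕ)
    (T : V ≃L[ℝ] E) : dyadicSum (g ∘ T) N = dyadicSum g N ∘ T := by
  funext v
  simp only [dyadicSum, Function.comp_apply, map_smul, T.toLinearEquiv.finrank_eq]

theorem hasCompactSupport_dyadicSum {g : E → F} (hg : HasCompactSupport g) (N : ℕ) :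
    HasCompactSupport (dyadicSum g N) := by
  induction N with
  | zero => exact HasCompactSupport.zero
  | succ N ih =>
    have succ : dyadicSum g (N + 1) = dyadicSum g N + fun z =>
        ((2 : ℝ) ^ N) ^ Module.finrank ℝ E • g ((2 : ℝ) ^ N • z) :=
      funext fun z => Finset.sum_range_succ _ N
    exact succ ▸ ih.add (HasCompactSupport.smul_left (hg.comp_smul (by positivity)))

variable [MeasurableSpace E] [BorelSpace E] [FiniteDimensional ℝ E]

theorem integrable_dyadicSum {μ : Measure E} [μ.IsAddHaarMeasure] {g : E → F}
    (hg : Integrable g μ) (N : ℕ) : Integrable (dyadicSum g N) μ :=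
  integrable_finsetSum _ fun j _ =>
    ((integrable_comp_smul_iff μ g (pow_ne_zero j two_ne_zero)).2 hg).smul _

section Fourier

variable {V : Type*} [NormedAddCommGroup V] [InnerProductSpace ℝ V] [FiniteDimensional ℝ V]
  [MeasurableSpace V] [BorelSpace V] {G : Type*} [NormedAddCommGroup G] [NormedSpace ℂ G]
  {g : V → G}

theorem fourier_dyadicSum (hg : Integrable g) (N : ℕ) (ξ : V) :
    𝓕 (dyadicSum g N) ξ = ∑ j ∈ Finset.range N, 𝓕 g (((2 : ℝ) ^ j)⁻¹ • ξ) := by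
  have integrable_dilate : ∀ j : ℕ, Integrable fun v : V =>
      ((2 : ℝ) ^ j) ^ Module.finrank ℝ V • g ((2 : ℝ) ^ j • v) := fun j =>
    ((integrable_comp_smul_iff volume g (pow_ne_zero j two_ne_zero)).2 hg).smul _
  simp only [fourier_eq, dyadicSum, Finset.smul_sum]
  rw [integral_finsetSum _ fun j _ => (fourierIntegral_convergent_iff ξ).2 (integrable_dilate j)]
  simp only [← fourier_eq, fourier_pow_smul_comp_smul g (pow_pos two_pos _)]

theorem norm_fourier_dyadicSum_le (hg : Integrable g) {C : ℝ} (hC0 : 0 ≤ C)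
    (hC : ∀ ξ, ‖𝓕 g ξ‖ ≤ C * min ‖ξ‖ ‖ξ‖⁻¹) (N : ℕ) (ξ : V) :
    ‖𝓕 (dyadicSum g N) ξ‖ ≤ C * 6 := by
  have norm_dilate : ∀ j : ℕ, ‖((2 : ℝ) ^ j)⁻¹ • ξ‖ = ‖ξ‖ / 2 ^ j := fun j => by
    rw [norm_smul_of_nonneg (by positivity), div_eq_inv_mul]
  calc ‖𝓕 (dyadicSum g N) ξ‖
      ≤ ∑ j ∈ Finset.range N, C * min (‖ξ‖ / 2 ^ j) (‖ξ‖ / 2 ^ j)⁻¹ := by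
        rw [fourier_dyadicSum hg]
        exact norm_sum_le_of_le _ fun j _ => norm_dilate j ▸ hC (((2 : ℝ) ^ j)⁻¹ • ξ)
    _ ≤ C * 6 := by
        rw [← Finset.mul_sum]
        exact mul_le_mul_of_nonneg_left (sum_min_div_two_pow_inv_le N (norm_nonneg ξ)) hC0

end Fourier
end DyadicSum

theorem IsL1Lipschitz.smul_measure {E F : Type*} [NormedAddCommGroup E] [MeasurableSpace E]
    [NormedAddCommGroup F] {μ : Measure E} {g : E → F} {L : ℝ} (hg : IsL1Lipschitz μ g L)
    (c : NNReal) : IsL1Lipschitz (c • μ) g (c * L) where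
  integrable := hg.integrable.smul_measure_nnreal
  integral_norm_sub_le h := by
    rw [integral_smul_nnreal_measure, NNReal.smul_def, smul_eq_mul, mul_assoc]
    exact mul_le_mul_of_nonneg_left (hg.integral_norm_sub_le h) c.coe_nonneg

theorem IsL1Lipschitz.ofReal {E : Type*} [NormedAddCommGroup E] [MeasurableSpace E]
    {μ : Measure E} {g : E → ℝ} {L : ℝ} (hg : IsL1Lipschitz μ g L) :
    IsL1Lipschitz μ (fun z => (g z : ℂ)) L where
  integrable := hg.integrable.ofReal
  integral_norm_sub_le h := by
    simpa only [← Complex.ofReal_sub, Complex.norm_real] using hg.integral_norm_sub_le h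

section DyadicBound

open scoped FourierTransform

theorem IsL1Lipschitz.exists_norm_fourier_le_mul_min {V F : Type*} [NormedAddCommGroup V]
    [InnerProductSpace ℝ V] [FiniteDimensional ℝ V] [MeasurableSpace V] [BorelSpace V]
    [NormedAddCommGroup F] [NormedSpace ℂ F] {g : V → F} {L : ℝ}
    (hg : IsL1Lipschitz volume g L) (hgc : HasCompactSupport g) (h0 : ∫ v, g v = 0) :
    ∃ C, 0 ≤ C ∧ ∀ ξ, ‖𝓕 g ξ‖ ≤ C * min ‖ξ‖ ‖ξ‖⁻¹ := by
  have first_moment : Integrable fun v => ‖v‖ * ‖g v‖ := by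
    obtain ⟨R, hR⟩ := hgc.isCompact.exists_bound_of_continuousOn continuousOn_id
    refine (hg.integrable.norm.const_mul R).mono' (continuous_norm.aestronglyMeasurable.mul
      hg.integrable.norm.aestronglyMeasurable) (ae_of_all _ fun v => ?_)
    rw [norm_of_nonneg (by positivity)]
    rcases eq_or_ne (g v) 0 with hv | hv
    · simp [hv]
    · gcongr
      exact hR v (subset_tsupport g hv)
  set A := 2 * π * ∫ v, ‖v‖ * ‖g v‖
  have low : ∀ ξ, ‖𝓕 g ξ‖ ≤ A * ‖ξ‖ :=
    norm_fourier_le_of_integral_eq_zero hg.integrable first_moment h0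
  have hA : 0 ≤ A := by positivity
  refine ⟨max A L, le_max_of_le_left hA, fun ξ => ?_⟩
  rw [mul_min_of_nonneg _ _ (le_max_of_le_left hA)]
  refine le_min ((low ξ).trans (by gcongr; exact le_max_left A L)) ?_
  rcases eq_or_ne ξ 0 with rfl | hξ
  · simpa using low 0
  · exact (hg.norm_fourier_le hξ).trans (by gcongr; exact le_max_right A L)

theorem exists_l2ConvBound_dyadicSum_euclidean {V : Type*} [NormedAddCommGroup V]
    [InnerProductSpace ℝ V] [FiniteDimensional ℝ V] [MeasurableSpace V] [BorelSpace V] {g : V → ℝ}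
    {L : ℝ} (hg : IsL1Lipschitz volume g L) (hgc : HasCompactSupport g) (h0 : ∫ v, g v = 0) :
    ∃ C, 0 ≤ C ∧ ∀ N, L2ConvBound volume (dyadicSum g N) C := by
  obtain ⟨C, hC0, hC⟩ := hg.ofReal.exists_norm_fourier_le_mul_min
    (hgc.comp_left Complex.ofReal_zero) (by rw [integral_complex_ofReal, h0, Complex.ofReal_zero])
  refine ⟨C * 6, by positivity, fun N => .of_norm_fourier_le (integrable_dyadicSum hg.integrable N)
    (hasCompactSupport_dyadicSum hgc N) fun ξ => ?_⟩
  have ofReal_dyadicSum :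
      (fun v => ((dyadicSum g N v : ℝ) : ℂ)) = dyadicSum (fun v => (g v : ℂ)) N :=
    funext fun v => by simp [dyadicSum]
  rw [ofReal_dyadicSum]
  exact norm_fourier_dyadicSum_le hg.ofReal.integrable hC0 hC N ξ

theorem exists_l2ConvBound_dyadicSum {E : Type*} [NormedAddCommGroup E] [NormedSpace ℝ E]
    [FiniteDimensional ℝ E] [MeasurableSpace E] [BorelSpace E] {μ : Measure E}
    [μ.IsAddHaarMeasure] {g : E → ℝ} {L : ℝ} (hL : 0 ≤ L) (hg : IsL1Lipschitz μ g L)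
    (hgc : HasCompactSupport g) (h0 : ∫ z, g z ∂μ = 0) :
    ∃ C, 0 ≤ C ∧ ∀ N, L2ConvBound μ (dyadicSum g N) C := by
  let T : EuclideanSpace ℝ (Fin (Module.finrank ℝ E)) ≃L[ℝ] E := toEuclidean.symm
  let ν : Measure E := volume.map T
  have : ν.IsAddHaarMeasure := T.isAddHaarMeasure_map volume
  have hT : MeasurePreserving T volume ν := ⟨T.continuous.measurable, rfl⟩
  set a := ν.addHaarScalarFactor μ
  set b := μ.addHaarScalarFactor ν
  have hν : ν = a • μ := Measure.isAddLeftInvariant_eq_smul ν μ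
  have hμ : μ = b • ν := Measure.isAddLeftInvariant_eq_smul μ ν
  have hgν : IsL1Lipschitz ν g (a * L) := by
    rw [hν]
    exact hg.smul_measure a
  have h0ν : ∫ v, (g ∘ T) v = 0 := by
    simp only [Function.comp_apply]
    rw [hT.integral_comp T.toHomeomorph.measurableEmbedding g, hν, integral_smul_nnreal_measure,
      h0, smul_zero]
  obtain ⟨C, hC0, hC⟩ := exists_l2ConvBound_dyadicSum_euclidean
    (hgν.comp_measurePreserving (by positivity) T hT) (hgc.comp_homeomorph T.toHomeomorph) h0ν
  refine ⟨b * C, by positivity, fun N => ?_⟩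
  rw [hμ]
  refine (L2ConvBound.of_comp_measurePreserving T hT ?_).smul_measure b
  exact dyadicSum_comp g N T ▸ hC N

end DyadicBound

section Homogeneous

variable {E F : Type*} [NormedAddCommGroup E] [NormedSpace ℝ E] [NormedAddCommGroup F]
  [NormedSpace ℝ F]

/-- Positive homogeneity of degree `s` on `E ∖ {0}`. Nothing is required at the origin, where the
functions considered here are singular. -/
def IsPosHomogeneous (f : E → F) (s : ℝ) : Prop :=
  ∀ c : ℝ, 0 < c → ∀ x, x ≠ 0 → f (c • x) = c ^ s • f x

namespace IsPosHomogeneous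

variable {s t : ℝ}

theorem clm_comp {G : Type*} [NormedAddCommGroup G] [NormedSpace ℝ G] {f : E → F}
    (hf : IsPosHomogeneous f s) (A : F →L[ℝ] G) : IsPosHomogeneous (fun x => A (f x)) s :=
  fun c hc x hx => by simp only [hf c hc x hx, map_smul]

theorem clm_mul {f : E → ℝ} (hf : IsPosHomogeneous f s) (ℓ : E →L[ℝ] ℝ) :
    IsPosHomogeneous (fun x => ℓ x * f x) (s + 1) := fun c hc x hx => by
  simp only [hf c hc x hx, map_smul, rpow_add_one hc.ne', smul_eq_mul]
  ring

theorem fderiv {f : E → F} (hf : IsPosHomogeneous f s) :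
    IsPosHomogeneous (fderiv ℝ f) (s - 1) := fun c hc x hx => by
  have dilate : (fun y => f (c • y)) =ᶠ[𝓝 x] (c ^ s) • f :=
    (isOpen_ne.eventually_mem hx).mono fun y hy => hf c hc y hy
  have h := dilate.fderiv_eq (𝕜 := ℝ)
  rw [fderiv_comp_smul, fderiv_const_smul_field, Pi.smul_apply] at h
  rw [rpow_sub_one hc.ne', div_eq_inv_mul, mul_smul, ← h, inv_smul_smul₀ hc.ne']

theorem exists_norm_le [FiniteDimensional ℝ E] {f : E → F} (hf : IsPosHomogeneous f s)
    (hc : ContinuousOn f {z | z ≠ 0}) : ∃ B, 0 ≤ B ∧ ∀ z, z ≠ 0 → ‖f z‖ ≤ B * ‖z‖ ^ s := by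
  obtain ⟨B, hB⟩ := (isCompact_sphere (0 : E) 1).exists_bound_of_continuousOn
    (hc.mono fun z hz => Metric.ne_of_mem_sphere hz one_ne_zero)
  refine ⟨max B 0, le_max_right B 0, fun z hz => ?_⟩
  have hz' : 0 < ‖z‖ := norm_pos_iff.2 hz
  have hu : ‖‖z‖⁻¹ • z‖ = 1 := norm_smul_inv_norm (𝕜 := ℝ) hz
  calc ‖f z‖ = ‖f (‖z‖ • ‖z‖⁻¹ • z)‖ := by rw [smul_inv_smul₀ hz'.ne']
    _ = ‖z‖ ^ s * ‖f (‖z‖⁻¹ • z)‖ := by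
        rw [hf _ hz' _ (norm_ne_zero_iff.1 (hu ▸ one_ne_zero)),
          norm_smul_of_nonneg (by positivity)]
    _ ≤ max B 0 * ‖z‖ ^ s := by
        rw [mul_comm]
        gcongr
        exact (hB _ (by simpa using hu)).trans (le_max_left B 0)

end IsPosHomogeneous

end Homogeneous

section ZeroMean

variable {E : Type*} [NormedAddCommGroup E] [NormedSpace ℝ E] [FiniteDimensional ℝ E]
  [MeasurableSpace E] [BorelSpace E] {μ : Measure E} [μ.IsAddHaarMeasure]

theorem integrableOn_annulus {F : Type*} [NormedAddCommGroup F] {f : E → F}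
    (hf : ContinuousOn f {z | z ≠ 0}) {r : ℝ} (hr : 0 < r) (s : ℝ) :
    IntegrableOn f (annulus E r s) μ := by
  obtain ⟨K, hK, hsub, hK0⟩ := exists_isCompact_annulus_subset (E := E) hr s
  exact ((hf.mono hK0).integrableOn_compact hK).mono_set hsub

theorem integral_fderiv_apply_eq_zero {Φ : E → ℝ} (hΦ : ContDiff ℝ 1 Φ)
    (hc : HasCompactSupport Φ) (v : E) : ∫ z, fderiv ℝ Φ z v ∂μ = 0 := by
  have hi : Integrable (fun z => fderiv ℝ Φ z v) μ :=
    ((hΦ.continuous_fderiv one_ne_zero).clm_apply continuous_const).integrable_of_hasCompactSupport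
      (hc.fderiv_apply ℝ v)
  simpa using integral_mul_fderiv_eq_neg_fderiv_mul_of_integrable (μ := μ)
    (f := fun _ : E => (1 : ℝ)) (g := Φ) (v := v) (by simp) (by simpa using hi)
    (by simpa using hΦ.continuous.integrable_of_hasCompactSupport hc)
    (fun x _ => differentiableAt_const _) (fun x _ => hΦ.differentiable one_ne_zero x)

end ZeroMean

section ZeroMeanDerivative

variable {E : Type*} [NormedAddCommGroup E] [NormedSpace ℝ E]

theorem IsPosHomogeneous.fderiv_mul_comp_smul {F : E → ℝ} {s : ℝ} (hF : IsPosHomogeneous F s)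
    (θ : E → ℝ) {a : ℝ} (ha : 0 < a) {z : E} (hz : z ≠ 0) :
    _root_.fderiv ℝ (fun w => F w * θ (a • w)) z =
      a ^ (1 - s) • _root_.fderiv ℝ (fun w => F w * θ w) (a • z) := by
  have dilate : (fun w => F w * θ (a • w)) =ᶠ[𝓝 z]
      a ^ (-s) • fun w => (fun u => F u * θ u) (a • w) :=
    (isOpen_ne.eventually_mem hz).mono fun w hw => by
      simp only [Pi.smul_apply, hF a ha w hw, smul_eq_mul, rpow_neg ha.le]
      field_simp
  rw [dilate.fderiv_eq, fderiv_const_smul_field, Pi.smul_apply,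
    fderiv_comp_smul (f := fun u => F u * θ u), smul_smul, ← rpow_add_one ha.ne', neg_add_eq_sub]

variable [FiniteDimensional ℝ E]

theorem contDiff_mul_bump_sub_bump {F : E → ℝ} (hF : ContDiffOn ℝ 1 F {z | z ≠ 0})
    (θ : ContDiffBump (0 : E)) (a b : ℝ) :
    ContDiff ℝ 1 fun z => F z * (θ (a • z) - θ (b • z)) := by
  refine contDiff_iff_contDiffAt.2 fun z => ?_
  rcases eq_or_ne z 0 with rfl | hz
  · have dilate_eq_one : ∀ c : ℝ, ∀ᶠ w : E in 𝓝 0, θ (c • w) = 1 := fun c =>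
      ((continuous_const_smul c).tendsto' (0 : E) 0 (smul_zero c)).eventually
        θ.eventuallyEq_one
    refine (contDiffAt_const (c := (0 : ℝ))).congr_of_eventuallyEq ?_
    filter_upwards [dilate_eq_one a, dilate_eq_one b] with w ha hb
    rw [ha, hb, sub_self, mul_zero]
  · exact (hF.contDiffAt (isOpen_ne.mem_nhds hz)).mul
      ((θ.contDiff.comp (contDiff_const_smul a)).sub
        (θ.contDiff.comp (contDiff_const_smul b))).contDiffAt

variable [MeasurableSpace E] [BorelSpace E] {μ : Measure E} [μ.IsAddHaarMeasure]

theorem integral_pow_smul_comp_smul {G : Type*} [NormedAddCommGroup G] [NormedSpace ℝ G]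
    (g : E → G) {a : ℝ} (ha : 0 < a) :
    ∫ z, a ^ Module.finrank ℝ E • g (a • z) ∂μ = ∫ z, g z ∂μ := by
  have hpos : 0 < a ^ Module.finrank ℝ E := pow_pos ha _
  rw [integral_smul, Measure.integral_comp_smul, abs_of_pos (inv_pos.2 hpos),
    smul_inv_smul₀ hpos.ne']

theorem integrable_fderiv_mul_bump_sub_indicator {F : E → ℝ}
    (hF : ContDiffOn ℝ 1 F {z | z ≠ 0}) (θ : ContDiffBump (0 : E)) (v : E) :
    Integrable (fun z => fderiv ℝ (fun w => F w * θ w) z v -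
      (Metric.closedBall 0 θ.rOut).indicator (fun z => fderiv ℝ F z v) z) μ := by
  set K : Set E := Metric.closedBall 0 θ.rOut \ Metric.ball 0 θ.rIn
  have hK : IsCompact K := (isCompact_closedBall 0 _).diff Metric.isOpen_ball
  have hK0 : K ⊆ {z | z ≠ 0} := by
    rintro z hz rfl
    exact hz.2 (Metric.mem_ball_self θ.rIn_pos)
  have continuousOn_fderiv : ∀ G : E → ℝ, ContDiffOn ℝ 1 G {z | z ≠ 0} →
      ContinuousOn (fun z => fderiv ℝ G z v) K := fun G hG =>
    ((hG.continuousOn_fderiv_of_isOpen isOpen_ne le_rfl).clm_apply continuousOn_const).mono hK0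
  have on_K : IntegrableOn (fun z => fderiv ℝ (fun w => F w * θ w) z v - fderiv ℝ F z v) K μ :=
    ((continuousOn_fderiv _ (hF.mul θ.contDiff.contDiffOn)).sub
      (continuousOn_fderiv _ hF)).integrableOn_compact hK
  refine ((integrable_indicator_iff hK.measurableSet).2 on_K).congr ?_
  refine ae_of_all _ fun z => ?_
  beta_reduce
  by_cases hzK : z ∈ K
  · rw [indicator_of_mem hzK, indicator_of_mem hzK.1]
  rw [indicator_of_notMem hzK]
  by_cases hout : z ∈ Metric.closedBall 0 θ.rOut
  · have hin : z ∈ Metric.ball 0 θ.rIn := by_contra fun h => hzK ⟨hout, h⟩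
    have eq_F : (fun w => F w * θ w) =ᶠ[𝓝 z] F :=
      (θ.eventuallyEq_one_of_mem_ball hin).mono fun w hw => by simp [hw]
    rw [indicator_of_mem hout, eq_F.fderiv_eq, sub_self]
  · have eq_zero : (fun w => F w * θ w) =ᶠ[𝓝 z] 0 := by
      filter_upwards [Metric.isClosed_closedBall.isOpen_compl.eventually_mem hout] with w hw
      rw [θ.zero_of_le_dist (not_le.1 (mt Metric.mem_closedBall.2 hw)).le, mul_zero, Pi.zero_apply]
    simp [indicator_of_notMem hout, eq_zero.fderiv_eq]

theorem exists_integrable_fderiv_mul_bump_dilate {F : E → ℝ}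
    (hF : ContDiffOn ℝ 1 F {z | z ≠ 0})
    (hom : IsPosHomogeneous F (1 - Module.finrank ℝ E)) (θ : ContDiffBump (0 : E))
    (hθ : θ.rOut = 1) (v : E) :
    ∃ P : E → ℝ, Integrable P μ ∧ ∀ ρ : ℝ, 0 < ρ → ∀ z, z ≠ 0 →
      fderiv ℝ (fun w => F w * θ (ρ⁻¹ • w)) z v =
        ρ⁻¹ ^ Module.finrank ℝ E • P (ρ⁻¹ • z) +
          (Metric.closedBall 0 ρ).indicator (fun z => fderiv ℝ F z v) z := by
  refine ⟨_, integrable_fderiv_mul_bump_sub_indicator hF θ v, fun ρ hρ z hz => ?_⟩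
  have mem_iff : ρ⁻¹ • z ∈ Metric.closedBall (0 : E) 1 ↔ z ∈ Metric.closedBall (0 : E) ρ := by
    simp [norm_smul_of_nonneg (inv_nonneg.2 hρ.le), inv_mul_le_iff₀ hρ]
  have fderiv_hom : fderiv ℝ F z v =
      ρ⁻¹ ^ Module.finrank ℝ E * fderiv ℝ F (ρ⁻¹ • z) v := by
    rw [hom.fderiv _ (inv_pos.2 hρ) z hz, sub_sub_cancel_left, rpow_neg (inv_nonneg.2 hρ.le),
      rpow_natCast, _root_.smul_apply, smul_eq_mul, mul_inv_cancel_left₀ (by positivity)]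
  rw [hom.fderiv_mul_comp_smul θ (inv_pos.2 hρ) hz, sub_sub_cancel, rpow_natCast, hθ]
  by_cases hzρ : z ∈ Metric.closedBall (0 : E) ρ
  · simp only [indicator_of_mem hzρ, indicator_of_mem (mem_iff.2 hzρ), fderiv_hom,
      _root_.smul_apply, smul_eq_mul]
    ring
  · simp only [indicator_of_notMem hzρ, indicator_of_notMem (mt mem_iff.1 hzρ),
      _root_.smul_apply, sub_zero, add_zero]

variable [Nontrivial E]

-- The integral of `D_v (F (θ (z / s) - θ (z / r)))` is zero, and up to a difference of two dilates
-- of one integrable function, which have equal integrals, this is `1_{r < ‖z‖ ≤ s} D_v F`.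
theorem integral_annulus_fderiv_apply_eq_zero {F : E → ℝ}
    (hF : ContDiffOn ℝ 1 F {z | z ≠ 0})
    (hom : IsPosHomogeneous F (1 - Module.finrank ℝ E)) {r s : ℝ} (hr : 0 < r) (hrs : r ≤ s)
    (v : E) : ∫ z in annulus E r s, fderiv ℝ F z v ∂μ = 0 := by
  let θ : ContDiffBump (0 : E) := ⟨1 / 2, 1, by norm_num, by norm_num⟩
  have hs : 0 < s := hr.trans_le hrs
  obtain ⟨P, hP_int, hP⟩ := exists_integrable_fderiv_mul_bump_dilate (μ := μ) hF hom θ rfl v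
  set Pdil : ℝ → E → ℝ := fun ρ z => ρ⁻¹ ^ Module.finrank ℝ E • P (ρ⁻¹ • z)
  have Pdil_int : ∀ ρ : ℝ, 0 < ρ → Integrable (Pdil ρ) μ := fun ρ hρ =>
    (hP_int.comp_smul (inv_ne_zero hρ.ne')).fun_smul _
  have decomp : (fun z => fderiv ℝ (fun w => F w * (θ (s⁻¹ • w) - θ (r⁻¹ • w))) z v) =ᵐ[μ]
      Pdil s - Pdil r + (annulus E r s).indicator fun z => fderiv ℝ F z v := by
    filter_upwards [Measure.ae_ne μ 0] with z hz
    have diff : ∀ c : ℝ, DifferentiableAt ℝ (fun w => F w * θ (c • w)) z := fun c =>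
      ((hF.contDiffAt (isOpen_ne.mem_nhds hz)).mul
        (θ.contDiff.comp (contDiff_const_smul c)).contDiffAt).differentiableAt one_ne_zero
    simp only [mul_sub, fderiv_fun_sub (diff _) (diff _), _root_.sub_apply, hP s hs z hz,
      hP r hr z hz, indicator_annulus_eq_sub hrs, Pi.add_apply, Pi.sub_apply, Pdil]
    ring
  have compact : HasCompactSupport fun w => F w * (θ (s⁻¹ • w) - θ (r⁻¹ • w)) := by
    have bump : ∀ ρ : ℝ, 0 < ρ → HasCompactSupport fun w => θ (ρ⁻¹ • w) := fun ρ hρ =>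
      θ.hasCompactSupport.comp_smul (inv_ne_zero hρ.ne')
    exact ((bump s hs).sub (bump r hr)).mul_left
  have total := integral_fderiv_apply_eq_zero (μ := μ)
    (contDiff_mul_bump_sub_bump hF θ s⁻¹ r⁻¹) compact v
  have hA : Integrable ((annulus E r s).indicator fun z => fderiv ℝ F z v) μ :=
    (integrable_indicator_iff (measurableSet_annulus r s)).2 (integrableOn_annulus
      ((hF.continuousOn_fderiv_of_isOpen isOpen_ne le_rfl).clm_apply continuousOn_const) hr s)
  rwa [integral_congr_ae decomp, integral_add' ((Pdil_int s hs).sub (Pdil_int r hr)) hA,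
    integral_sub' (Pdil_int s hs) (Pdil_int r hr), integral_pow_smul_comp_smul P (inv_pos.2 hs),
    integral_pow_smul_comp_smul P (inv_pos.2 hr), sub_self, zero_add,
    integral_indicator (measurableSet_annulus r s)] at total

end ZeroMeanDerivative

section CZKernel

variable {E : Type*} [NormedAddCommGroup E] [NormedSpace ℝ E]

theorem IsPosHomogeneous.indicator_annulus_eq_dyadicSum {F : Type*} [NormedAddCommGroup F]
    [NormedSpace ℝ F] {f : E → F} (hf : IsPosHomogeneous f (-Module.finrank ℝ E)) (N : ℕ) :
    (annulus E (2⁻¹ ^ N) 1).indicator f = dyadicSum ((annulus E 2⁻¹ 1).indicator f) N := by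
  set cutoff : ℕ → E → F := fun j => (Metric.closedBall 0 (2⁻¹ ^ j)).indicator f
  have dilate : ∀ (j : ℕ) (z : E), ((2 : ℝ) ^ j) ^ Module.finrank ℝ E •
      (annulus E 2⁻¹ 1).indicator f ((2 : ℝ) ^ j • z) = cutoff j z - cutoff (j + 1) z := by
    intro j z
    have hj : (0 : ℝ) < 2 ^ j := by positivity
    have mem_iff : (2 : ℝ) ^ j • z ∈ annulus E 2⁻¹ 1 ↔ z ∈ annulus E (2⁻¹ ^ (j + 1)) (2⁻¹ ^ j) := by
      rw [smul_mem_annulus_iff hj, one_div, div_eq_inv_mul, ← inv_pow, ← pow_succ]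
    rw [← Pi.sub_apply, ← indicator_annulus_eq_sub
      (pow_le_pow_of_le_one (by norm_num) (by norm_num) j.le_succ)]
    by_cases hz : z ∈ annulus E (2⁻¹ ^ (j + 1)) (2⁻¹ ^ j)
    · rw [indicator_of_mem hz, indicator_of_mem (mem_iff.2 hz),
        hf _ hj z (annulus_subset_ne_zero (by positivity) hz), rpow_neg hj.le, rpow_natCast,
        smul_inv_smul₀ (by positivity)]
    · rw [indicator_of_notMem hz, indicator_of_notMem (mt mem_iff.1 hz), smul_zero]
  funext z
  rw [indicator_annulus_eq_sub (pow_le_one₀ (by norm_num) (by norm_num)), dyadicSum,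
    Finset.sum_congr rfl fun j _ => dilate j z,
    Finset.sum_range_sub' (fun j => cutoff j z), Pi.sub_apply]
  simp only [cutoff, pow_zero]

variable [MeasurableSpace E]

/-- A Calderón–Zygmund convolution kernel of class `C^n`: homogeneous of degree `-dim E`, with zero
mean. The mean over spheres is encoded by integrals over annuli. -/
structure IsCZKernel (μ : Measure E) (n : WithTop ℕ∞) (m : E → ℝ) : Prop where
  contDiffOn : ContDiffOn ℝ n m {z | z ≠ 0}
  isPosHomogeneous : IsPosHomogeneous m (-Module.finrank ℝ E)
  setIntegral_annulus : ∀ r s, 0 < r → r ≤ s → ∫ z in annulus E r s, m z ∂μ = 0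

namespace IsCZKernel

variable [BorelSpace E] {μ : Measure E} {n : WithTop ℕ∞} {m : E → ℝ}

theorem measurable (hm : IsCZKernel μ n m) : Measurable m :=
  measurable_of_continuousOn_compl_singleton 0 hm.contDiffOn.continuousOn

variable [FiniteDimensional ℝ E] [μ.IsAddHaarMeasure]

theorem integrable_indicator_annulus (hm : IsCZKernel μ n m) {r : ℝ} (hr : 0 < r) (s : ℝ) :
    Integrable ((annulus E r s).indicator m) μ :=
  (integrable_indicator_iff (measurableSet_annulus r s)).2
    (integrableOn_annulus hm.contDiffOn.continuousOn hr s)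

variable [Nontrivial E]

theorem exists_l2ConvBound (hm : IsCZKernel μ n m) (hn : 1 ≤ n) :
    ∃ C, 0 ≤ C ∧ ∀ N : ℕ, L2ConvBound μ ((annulus E (2⁻¹ ^ N) 1).indicator m) C := by
  obtain ⟨L, hL0, hL⟩ := exists_isL1Lipschitz_indicator_annulus (μ := μ) (hm.contDiffOn.of_le hn)
    (r := 2⁻¹) (s := 1) (by norm_num) (by norm_num)
  have compact : HasCompactSupport ((annulus E 2⁻¹ 1).indicator m) :=
    HasCompactSupport.intro (isCompact_closedBall (0 : E) 1) fun z hz =>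
      indicator_of_notMem (fun h => hz (annulus_subset_closedBall _ _ h)) _
  have mean : ∫ z, (annulus E 2⁻¹ 1).indicator m z ∂μ = 0 := by
    rw [integral_indicator (measurableSet_annulus _ _),
      hm.setIntegral_annulus _ _ (by norm_num) (by norm_num)]
  simp only [hm.isPosHomogeneous.indicator_annulus_eq_dyadicSum]
  exact exists_l2ConvBound_dyadicSum hL0 hL compact mean

theorem setIntegral_annulus_clm_mul_fderiv (hm : IsCZKernel μ n m) (hn : 1 ≤ n)
    (ℓ : E →L[ℝ] ℝ) (v : E) {r s : ℝ} (hr : 0 < r) (hrs : r ≤ s) :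
    ∫ z in annulus E r s, ℓ z * fderiv ℝ m z v ∂μ = 0 := by
  have hm1 : ContDiffOn ℝ 1 m {z | z ≠ 0} := hm.contDiffOn.of_le hn
  have hom : IsPosHomogeneous (fun z => ℓ z * m z) (1 - Module.finrank ℝ E) := by
    simpa only [neg_add_eq_sub] using hm.isPosHomogeneous.clm_mul ℓ
  have leibniz : ∀ z ∈ annulus E r s, ℓ z * fderiv ℝ m z v =
      fderiv ℝ (fun z => ℓ z * m z) z v - ℓ v * m z := by
    intro z hz
    have hz0 := annulus_subset_ne_zero hr.le hz
    rw [fderiv_fun_mul ℓ.differentiableAt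
      ((hm1.contDiffAt (isOpen_ne.mem_nhds hz0)).differentiableAt one_ne_zero)]
    simp [mul_comm]
  have hF : ContDiffOn ℝ 1 (fun z => ℓ z * m z) {z | z ≠ 0} := ℓ.contDiff.contDiffOn.mul hm1
  have hDF : ContinuousOn (fun z => fderiv ℝ (fun z => ℓ z * m z) z v) {z | z ≠ 0} :=
    (hF.continuousOn_fderiv_of_isOpen isOpen_ne le_rfl).clm_apply continuousOn_const
  rw [setIntegral_congr_fun (measurableSet_annulus r s) leibniz,
    integral_sub (integrableOn_annulus hDF hr s)
      ((integrableOn_annulus hm1.continuousOn hr s).const_mul _),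
    integral_annulus_fderiv_apply_eq_zero hF hom hr hrs, integral_const_mul,
    hm.setIntegral_annulus r s hr hrs, mul_zero, sub_zero]

theorem clm_mul_fderiv (hm : IsCZKernel μ (n + 1) m) (ℓ : E →L[ℝ] ℝ) (v : E) :
    IsCZKernel μ n fun z => ℓ z * fderiv ℝ m z v where
  contDiffOn := ℓ.contDiff.contDiffOn.mul
    ((hm.contDiffOn.fderiv_of_isOpen isOpen_ne le_rfl).clm_apply contDiffOn_const)
  isPosHomogeneous := by
    simpa only [sub_add_cancel, ContinuousLinearMap.apply_apply] using
      (hm.isPosHomogeneous.fderiv.clm_comp (ContinuousLinearMap.apply ℝ ℝ v)).clm_mul ℓ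
  setIntegral_annulus _ _ hr hrs :=
    hm.setIntegral_annulus_clm_mul_fderiv le_add_self ℓ v hr hrs

end IsCZKernel

end CZKernel

section Majorant

variable {E : Type*} [NormedAddCommGroup E] [NormedSpace ℝ E]

/-- The radial majorant `‖z‖ ^ (α - dim E)` for `‖z‖ ≤ 1` and `‖z‖ ^ (-dim E - 1)` for `1 < ‖z‖`,
which bounds the part of the commutator kernel that is not of Calderón–Zygmund type. -/
def radialMajorant (α : ℝ) (z : E) : ℝ :=
  if ‖z‖ ≤ 1 then ‖z‖ ^ (α - Module.finrank ℝ E) else ‖z‖ ^ (-(Module.finrank ℝ E : ℝ) - 1)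

theorem radialMajorant_nonneg (α : ℝ) (z : E) : 0 ≤ radialMajorant α z := by
  unfold radialMajorant
  split_ifs <;> positivity

variable [MeasurableSpace E] [BorelSpace E]

theorem measurable_radialMajorant (α : ℝ) : Measurable (radialMajorant (E := E) α) :=
  Measurable.ite (measurableSet_le measurable_norm measurable_const)
    (measurable_norm.pow_const _) (measurable_norm.pow_const _)

theorem integrable_radialMajorant [FiniteDimensional ℝ E] [Nontrivial E] (μ : Measure E)
    [μ.IsAddHaarMeasure] {α : ℝ} (hα : 0 < α) : Integrable (radialMajorant (E := E) α) μ := by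
  set n := Module.finrank ℝ E with hn
  have jacobian : ∀ y : ℝ, 0 < y → ∀ a : ℝ, y ^ (n - 1) * y ^ a = y ^ ((n : ℝ) - 1 + a) := by
    intro y hy a
    rw [rpow_add hy, ← Nat.cast_pred Module.finrank_pos, rpow_natCast]
  refine (integrable_fun_norm_addHaar μ
    (f := fun t : ℝ => if t ≤ 1 then t ^ (α - n) else t ^ (-(n : ℝ) - 1))).2 ?_
  rw [← Ioc_union_Ioi_eq_Ioi zero_le_one]
  refine IntegrableOn.union ?_ ?_
  · have h := (intervalIntegral.intervalIntegrable_rpow' (a := 0) (b := 1)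
      (show -1 < α - 1 by linarith)).1
    refine h.congr_fun (fun y hy => ?_) measurableSet_Ioc
    simp only [if_pos hy.2, smul_eq_mul, ← hn, jacobian y hy.1]
    ring_nf
  · have h := integrableOn_Ioi_rpow_of_lt (show (-2 : ℝ) < -1 by norm_num) zero_lt_one
    refine h.congr_fun (fun y (hy : 1 < y) => ?_) measurableSet_Ioi
    simp only [if_neg hy.not_ge, smul_eq_mul, ← hn, jacobian y (zero_lt_one.trans hy)]
    ring_nf

end Majorant

section TruncatedIntegral

variable {E : Type*} [NormedAddCommGroup E]

/-- The convolution kernel `(x, y) ↦ m (x - y)` of `m`, restricted to `‖x - y‖ ≤ 1`. -/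
def localConvKernel (m : E → ℝ) (x y : E) : ℝ :=
  (Metric.closedBall 0 1).indicator m (x - y)

theorem indicator_localConvKernel_mul (m f : E → ℝ) (ε : ℝ) (x : E) :
    {y | ε < ‖x - y‖}.indicator (fun y => localConvKernel m x y * f y) =
      fun y => (annulus E ε 1).indicator m (x - y) * f y := by
  funext y
  by_cases hy : ε < ‖x - y‖ <;> by_cases h1 : ‖x - y‖ ≤ 1 <;>
    simp [localConvKernel, indicator, annulus, hy, h1]

variable [MeasurableSpace E]

/-- The truncation at distance `ε` from the diagonal of the integral operator with kernel `K`. -/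
def truncatedIntegral (μ : Measure E) (K : E → E → ℝ) (f : E → ℝ) (ε : ℝ) (x : E) : ℝ :=
  ∫ y in {y | ε < ‖x - y‖}, K x y * f y ∂μ

variable [BorelSpace E] {μ : Measure E}

theorem measurableSet_lt_norm_sub (ε : ℝ) (x : E) : MeasurableSet {y : E | ε < ‖x - y‖} :=
  (isOpen_lt continuous_const (by fun_prop)).measurableSet

theorem truncatedIntegral_localConvKernel (m f : E → ℝ) (ε : ℝ) (x : E) :
    truncatedIntegral μ (localConvKernel m) f ε x =
      ∫ y, (annulus E ε 1).indicator m (x - y) * f y ∂μ := by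
  rw [truncatedIntegral, ← integral_indicator (measurableSet_lt_norm_sub ε x),
    indicator_localConvKernel_mul]

theorem tendsto_setIntegral_lt_norm_sub [NullSingletonClass μ] {h : E → ℝ}
    (hh : Integrable h μ) (x : E) :
    Tendsto (fun ε : ℝ => ∫ y in {y | ε < ‖x - y‖}, h y ∂μ) (𝓝[>] 0) (𝓝 (∫ y, h y ∂μ)) := by
  simp only [← integral_indicator (measurableSet_lt_norm_sub _ x)]
  refine tendsto_integral_filter_of_dominated_convergence (fun y => ‖h y‖)
    (Eventually.of_forall fun ε =>
      (hh.indicator (measurableSet_lt_norm_sub ε x)).aestronglyMeasurable)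
    (Eventually.of_forall fun ε => Eventually.of_forall fun y => norm_indicator_le_norm_self _ _)
    hh.norm ?_
  filter_upwards [Measure.ae_ne μ x] with y hy
  refine tendsto_const_nhds.congr' ?_
  filter_upwards [Ioo_mem_nhdsGT (norm_sub_pos_iff.2 hy.symm)] with ε hε
  exact (indicator_of_mem (show y ∈ {y | ε < ‖x - y‖} from hε.2) h).symm

variable {K : E → E → ℝ} {f Φ : E → ℝ}

theorem integrable_mul_of_norm_le_sub [μ.IsAddLeftInvariant] [μ.IsNegInvariant]
    (hK : Measurable (Function.uncurry K)) (hΦ : Integrable Φ μ)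
    (hKΦ : ∀ x y, ‖K x y‖ ≤ Φ (x - y)) (hf : Continuous f) (hfc : HasCompactSupport f) (x : E) :
    Integrable (fun y => K x y * f y) μ := by
  obtain ⟨Cf, hCf⟩ := hfc.exists_bound_of_continuous hf
  exact ((hΦ.comp_sub_left x).mono' (hK.comp measurable_prodMk_left).aestronglyMeasurable
    (Eventually.of_forall (hKΦ x))).mul_bdd hf.aestronglyMeasurable (Eventually.of_forall hCf)

variable [SecondCountableTopology E]

theorem measurable_uncurry_localConvKernel {m : E → ℝ} (hm : Measurable m) :
    Measurable (Function.uncurry (localConvKernel m)) :=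
  (hm.indicator Metric.isClosed_closedBall.measurableSet).comp
    (measurable_fst.sub measurable_snd)

theorem measurable_truncatedIntegral [SFinite μ] (hK : Measurable (Function.uncurry K))
    (hf : Measurable f) (ε : ℝ) : Measurable (truncatedIntegral μ K f ε) := by
  have meas : MeasurableSet {q : E × E | ε < ‖q.1 - q.2‖} :=
    (isOpen_lt continuous_const (by fun_prop)).measurableSet
  have slice : truncatedIntegral μ K f ε = fun x => ∫ y, {q : E × E | ε < ‖q.1 - q.2‖}.indicator
      (fun q => Function.uncurry K q * f q.2) (x, y) ∂μ := by
    funext x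
    exact (integral_indicator (measurableSet_lt_norm_sub ε x)).symm
  rw [slice]
  exact (((hK.mul (hf.comp measurable_snd)).indicator
    meas).stronglyMeasurable.integral_prod_right').measurable

theorem eLpNorm_truncatedIntegral_le_of_norm_le_sub [SFinite μ] [μ.IsAddLeftInvariant]
    [μ.IsNegInvariant] (hΦm : Measurable Φ) (hΦ : Integrable Φ μ)
    (hKΦ : ∀ x y, ‖K x y‖ ≤ Φ (x - y)) (hf : Measurable f) (ε : ℝ) :
    eLpNorm (truncatedIntegral μ K f ε) 2 μ ≤
      ENNReal.ofReal (∫ z, Φ z ∂μ) * eLpNorm f 2 μ := by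
  have hΦ0 : ∀ z, 0 ≤ Φ z := fun z => (norm_nonneg _).trans (sub_zero z ▸ hKΦ z 0)
  have young := eLpNorm_le_of_enorm_le_lintegral_sub (μ := μ) (p := 2) (q := 2)
    Real.HolderConjugate.two_two hΦm.enorm hf (u := truncatedIntegral μ K f ε) fun x => by
      refine (enorm_integral_le_lintegral_enorm _).trans ((setLIntegral_le_lintegral _ _).trans ?_)
      refine lintegral_mono fun y => ?_
      rw [enorm_mul]
      gcongr
      exact enorm_le_iff_norm_le.2 ((hKΦ x y).trans (le_abs_self _))
  rwa [← ofReal_integral_norm_eq_lintegral_enorm hΦ, ENNReal.ofReal_ofNat,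
    integral_congr_ae (Eventually.of_forall fun z => Real.norm_of_nonneg (hΦ0 z))] at young

end TruncatedIntegral

section PrincipalValue

variable {E : Type*} [NormedAddCommGroup E] [NormedSpace ℝ E] [FiniteDimensional ℝ E]
  [Nontrivial E] [MeasurableSpace E] [BorelSpace E] {μ : Measure E} [μ.IsAddHaarMeasure]
  {n : WithTop ℕ∞} {m f : E → ℝ}

theorem IsCZKernel.integrable_localConvKernel_mul_sub (hm : IsCZKernel μ n m) {L : NNReal}
    (hf : LipschitzWith L f) (x : E) :
    Integrable (fun y => localConvKernel m x y * (f y - f x)) μ := by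
  obtain ⟨B, hB0, hB⟩ := hm.isPosHomogeneous.exists_norm_le hm.contDiffOn.continuousOn
  refine (((integrable_radialMajorant μ one_pos).comp_sub_left x).const_mul (B * L)).mono'
    (((measurable_uncurry_localConvKernel hm.measurable).comp measurable_prodMk_left).mul
      (hf.continuous.measurable.sub measurable_const)).aestronglyMeasurable ?_
  filter_upwards [Measure.ae_ne μ x] with y hy
  have hpos : 0 < ‖x - y‖ := norm_sub_pos_iff.2 hy.symm
  unfold localConvKernel
  by_cases h1 : x - y ∈ Metric.closedBall 0 1
  · rw [indicator_of_mem h1, norm_mul, radialMajorant, if_pos (mem_closedBall_zero_iff.1 h1)]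
    calc ‖m (x - y)‖ * ‖f y - f x‖
        ≤ (B * ‖x - y‖ ^ (-Module.finrank ℝ E : ℝ)) * (L * ‖x - y‖) := by
          gcongr
          · exact hB _ (norm_pos_iff.1 hpos)
          · exact norm_sub_rev x y ▸ hf.norm_sub_le y x
      _ = B * L * ‖x - y‖ ^ (1 - Module.finrank ℝ E : ℝ) := by
          rw [← neg_add_eq_sub (Module.finrank ℝ E : ℝ), rpow_add_one hpos.ne']
          ring
  · rw [indicator_of_notMem h1, zero_mul, norm_zero]
    exact mul_nonneg (by positivity) (radialMajorant_nonneg _ _)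

-- The zero mean of `m` allows subtracting `f x` from `f y`, which makes the integrand integrable.
theorem IsCZKernel.exists_tendsto_truncatedIntegral_localConvKernel (hm : IsCZKernel μ n m)
    {L : NNReal} (hf : LipschitzWith L f) (x : E) :
    ∃ l, Tendsto (fun ε => truncatedIntegral μ (localConvKernel m) f ε x) (𝓝[>] 0) (𝓝 l) := by
  have hint := hm.integrable_localConvKernel_mul_sub hf x
  refine ⟨_, (tendsto_setIntegral_lt_norm_sub hint x).congr' ?_⟩
  filter_upwards [Ioo_mem_nhdsGT (zero_lt_one' ℝ)] with ε hε
  have hA := (hm.integrable_indicator_annulus hε.1 1).comp_sub_left x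
  have mean : ∫ y, (annulus E ε 1).indicator m (x - y) * f x ∂μ = 0 := by
    rw [integral_mul_const, integral_sub_left_eq_self ((annulus E ε 1).indicator m),
      integral_indicator (measurableSet_annulus _ _), hm.setIntegral_annulus _ _ hε.1 hε.2.le,
      zero_mul]
  rw [truncatedIntegral_localConvKernel, ← integral_indicator (measurableSet_lt_norm_sub ε x),
    indicator_localConvKernel_mul, ← add_zero (∫ _, _ ∂μ), ← mean,
    ← integral_add ?_ (hA.mul_const _)]
  · simp only [mul_sub, sub_add_cancel]
  · rw [← indicator_localConvKernel_mul]
    exact hint.indicator (measurableSet_lt_norm_sub ε x)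

end PrincipalValue

section CZDecomposition

open scoped ContDiff

variable {E : Type*} [NormedAddCommGroup E] [MeasurableSpace E] {κ : Type*} [Fintype κ]

/-- The kernel `K` splits into a remainder `R` dominated by the integrable convolution kernel `Φ`
and, near the diagonal, the convolution kernels of the `m i` with `x`-dependent coefficients `a i`
bounded by `A`. -/
structure IsCZDecomposition (μ : Measure E) (K R : E → E → ℝ) (Φ : E → ℝ) (a : κ → E → ℝ) (A : ℝ)
    (m : κ → E → ℝ) : Prop where
  eq : ∀ x y, K x y = R x y + ∑ i, a i x * localConvKernel (m i) x y
  measurable_remainder : Measurable (Function.uncurry R)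
  measurable_majorant : Measurable Φ
  integrable_majorant : Integrable Φ μ
  norm_remainder_le : ∀ x y, ‖R x y‖ ≤ Φ (x - y)
  measurable_coeff : ∀ i, Measurable (a i)
  norm_coeff_le : ∀ i x, ‖a i x‖ ≤ A

namespace IsCZDecomposition

variable [NormedSpace ℝ E] [BorelSpace E] {μ : Measure E} {n : WithTop ℕ∞}
  {K R : E → E → ℝ} {Φ : E → ℝ} {a : κ → E → ℝ} {A : ℝ} {m : κ → E → ℝ} {f : E → ℝ}

theorem eLpNorm_coeff_mul_le (hK : IsCZDecomposition μ K R Φ a A m) (i : κ) {C ε : ℝ}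
    (hC : L2ConvBound μ ((annulus E ε 1).indicator (m i)) C) (hf : ContDiff ℝ ∞ f)
    (hfc : HasCompactSupport f) :
    eLpNorm (fun x => a i x * truncatedIntegral μ (localConvKernel (m i)) f ε x) 2 μ ≤
      ENNReal.ofReal (A * C) * eLpNorm f 2 μ := by
  have hA : 0 ≤ A := (norm_nonneg _).trans (hK.norm_coeff_le i 0)
  rw [ENNReal.ofReal_mul hA, mul_assoc]
  refine (eLpNorm_le_mul_eLpNorm_of_ae_le_mul (c := A)
    (g := truncatedIntegral μ (localConvKernel (m i)) f ε) (Eventually.of_forall fun x => ?_)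
    2).trans ?_
  · rw [norm_mul]
    gcongr
    exact hK.norm_coeff_le i x
  · gcongr
    simpa only [← truncatedIntegral_localConvKernel] using hC f hf hfc

variable [FiniteDimensional ℝ E] [μ.IsAddHaarMeasure]

theorem truncatedIntegral_eq (hK : IsCZDecomposition μ K R Φ a A m)
    (hm : ∀ i, IsCZKernel μ n (m i)) (hf : Continuous f) (hfc : HasCompactSupport f) {ε : ℝ}
    (hε : 0 < ε) (x : E) :
    truncatedIntegral μ K f ε x = truncatedIntegral μ R f ε x +
      ∑ i, a i x * truncatedIntegral μ (localConvKernel (m i)) f ε x := by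
  obtain ⟨Cf, hCf⟩ := hfc.exists_bound_of_continuous hf
  have intR : IntegrableOn (fun y => R x y * f y) {y | ε < ‖x - y‖} μ :=
    (integrable_mul_of_norm_le_sub hK.measurable_remainder hK.integrable_majorant
      hK.norm_remainder_le hf hfc x).integrableOn
  have intm : ∀ i, IntegrableOn (fun y => localConvKernel (m i) x y * f y)
      {y | ε < ‖x - y‖} μ := fun i => by
    rw [← integrable_indicator_iff (measurableSet_lt_norm_sub ε x), indicator_localConvKernel_mul]
    exact (((hm i).integrable_indicator_annulus hε 1).comp_sub_left x).mul_bdd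
      hf.aestronglyMeasurable (Eventually.of_forall hCf)
  simp only [truncatedIntegral, hK.eq, add_mul, Finset.sum_mul, mul_assoc, ← integral_const_mul]
  rw [integral_add intR (integrable_finsetSum _ fun i _ => (intm i).const_mul _),
    integral_finsetSum _ fun i _ => (intm i).const_mul _]

theorem measurable_truncatedIntegral (hK : IsCZDecomposition μ K R Φ a A m)
    (hm : ∀ i, IsCZKernel μ n (m i)) (hf : Measurable f) (ε : ℝ) :
    Measurable (truncatedIntegral μ K f ε) := by
  have eq : K = fun x y => R x y + ∑ i, a i x * localConvKernel (m i) x y :=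
    funext₂ hK.eq
  refine _root_.measurable_truncatedIntegral (eq ▸ ?_) hf ε
  exact hK.measurable_remainder.add (Finset.measurable_fun_sum _ fun i _ =>
    ((hK.measurable_coeff i).comp measurable_fst).mul
      (measurable_uncurry_localConvKernel (hm i).measurable))

theorem eLpNorm_truncatedIntegral_le (hK : IsCZDecomposition μ K R Φ a A m)
    (hm : ∀ i, IsCZKernel μ n (m i)) {C : κ → ℝ} (hC0 : ∀ i, 0 ≤ C i) {ε : ℝ} (hε : 0 < ε)
    (hC : ∀ i, L2ConvBound μ ((annulus E ε 1).indicator (m i)) (C i))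
    (hf : ContDiff ℝ ∞ f) (hfc : HasCompactSupport f) :
    eLpNorm (truncatedIntegral μ K f ε) 2 μ ≤
      ENNReal.ofReal (∫ z, Φ z ∂μ + A * ∑ i, C i) * eLpNorm f 2 μ := by
  set V : κ → E → ℝ := fun i x => a i x * truncatedIntegral μ (localConvKernel (m i)) f ε x
  have hfm := hf.continuous.measurable
  have hVm : ∀ i, Measurable (V i) := fun i => (hK.measurable_coeff i).mul
    (_root_.measurable_truncatedIntegral (measurable_uncurry_localConvKernel (hm i).measurable)
      hfm ε)
  have hAC : ∀ i, 0 ≤ A * C i := fun i =>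
    mul_nonneg ((norm_nonneg _).trans (hK.norm_coeff_le i 0)) (hC0 i)
  have hΦ : 0 ≤ ∫ z, Φ z ∂μ := integral_nonneg fun z =>
    (norm_nonneg _).trans (sub_zero z ▸ hK.norm_remainder_le z 0)
  have eq : truncatedIntegral μ K f ε = truncatedIntegral μ R f ε + ∑ i, V i := by
    funext x
    rw [hK.truncatedIntegral_eq hm hf.continuous hfc hε x, Pi.add_apply, Finset.sum_apply]
  calc eLpNorm (truncatedIntegral μ K f ε) 2 μ
      ≤ eLpNorm (truncatedIntegral μ R f ε) 2 μ + eLpNorm (∑ i, V i) 2 μ := by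
        rw [eq]
        refine eLpNorm_add_le (_root_.measurable_truncatedIntegral hK.measurable_remainder hfm
          ε).aestronglyMeasurable ?_ one_le_two
        exact Finset.aestronglyMeasurable_sum _ fun i _ => (hVm i).aestronglyMeasurable
    _ ≤ eLpNorm (truncatedIntegral μ R f ε) 2 μ + ∑ i, eLpNorm (V i) 2 μ := by
        gcongr
        exact eLpNorm_sum_le (fun i _ => (hVm i).aestronglyMeasurable) one_le_two
    _ ≤ ENNReal.ofReal (∫ z, Φ z ∂μ) * eLpNorm f 2 μ +
          ∑ i, ENNReal.ofReal (A * C i) * eLpNorm f 2 μ := by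
        gcongr with i
        · exact eLpNorm_truncatedIntegral_le_of_norm_le_sub hK.measurable_majorant
            hK.integrable_majorant hK.norm_remainder_le hfm ε
        · exact hK.eLpNorm_coeff_mul_le i (hC i) hf hfc
    _ = ENNReal.ofReal (∫ z, Φ z ∂μ + A * ∑ i, C i) * eLpNorm f 2 μ := by
        rw [Finset.mul_sum, ENNReal.ofReal_add hΦ (Finset.sum_nonneg fun i _ => hAC i),
          ENNReal.ofReal_sum_of_nonneg fun i _ => hAC i, add_mul, Finset.sum_mul]

variable [Nontrivial E]

theorem exists_tendsto_truncatedIntegral (hK : IsCZDecomposition μ K R Φ a A m)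
    (hm : ∀ i, IsCZKernel μ n (m i)) {L : NNReal} (hf : LipschitzWith L f)
    (hfc : HasCompactSupport f) (x : E) :
    ∃ l, Tendsto (fun ε => truncatedIntegral μ K f ε x) (𝓝[>] 0) (𝓝 l) := by
  choose l hl using fun i => (hm i).exists_tendsto_truncatedIntegral_localConvKernel hf x
  have limR := tendsto_setIntegral_lt_norm_sub (integrable_mul_of_norm_le_sub
    hK.measurable_remainder hK.integrable_majorant hK.norm_remainder_le hf.continuous hfc x) x
  refine ⟨_, (limR.add (tendsto_finsetSum Finset.univ fun i _ =>
    (hl i).const_mul (a i x))).congr' ?_⟩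
  filter_upwards [self_mem_nhdsWithin] with ε hε
  exact (hK.truncatedIntegral_eq hm hf.continuous hfc hε x).symm

end IsCZDecomposition

theorem exists_eLpNorm_le_of_isCZDecomposition [NormedSpace ℝ E] [FiniteDimensional ℝ E]
    [Nontrivial E] [BorelSpace E] {μ : Measure E} [μ.IsAddHaarMeasure] {n : WithTop ℕ∞}
    {m : κ → E → ℝ} (hm : ∀ i, IsCZKernel μ n (m i)) (hn : 1 ≤ n) :
    ∃ C, 0 ≤ C ∧ ∀ {K R : E → E → ℝ} {Φ : E → ℝ} {a : κ → E → ℝ} {A : ℝ},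
      IsCZDecomposition μ K R Φ a A m → ∀ {f : E → ℝ}, ContDiff ℝ ∞ f →
        HasCompactSupport f → ∀ {l : E → ℝ},
          (∀ x, Tendsto (fun ε => truncatedIntegral μ K f ε x) (𝓝[>] 0) (𝓝 (l x))) →
            eLpNorm l 2 μ ≤ ENNReal.ofReal (∫ z, Φ z ∂μ + A * C) * eLpNorm f 2 μ := by
  choose C hC0 hC using fun i => (hm i).exists_l2ConvBound hn
  refine ⟨∑ i, C i, Finset.sum_nonneg fun i _ => hC0 i, ?_⟩
  intro K R Φ a A hK f hf hfc l hl
  have dyadic : Tendsto (fun N : ℕ => (2⁻¹ : ℝ) ^ N) atTop (𝓝[>] 0) :=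
    tendsto_nhdsWithin_iff.2 ⟨tendsto_pow_atTop_nhds_zero_of_lt_one (by norm_num) (by norm_num),
      Eventually.of_forall fun N => mem_Ioi.2 (by positivity)⟩
  refine (Lp.eLpNorm_lim_le_liminf_eLpNorm (fun N : ℕ =>
    (hK.measurable_truncatedIntegral hm hf.continuous.measurable
      (2⁻¹ ^ N)).aestronglyMeasurable) l
    (Eventually.of_forall fun x => (hl x).comp dyadic)).trans ?_
  refine liminf_le_of_le (by isBoundedDefault) fun b hb => ?_
  obtain ⟨N, hN⟩ := hb.exists
  exact hN.trans (hK.eLpNorm_truncatedIntegral_le hm hC0 (ε := 2⁻¹ ^ N) (by positivity)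
    (fun i => hC i N) hf hfc)

end CZDecomposition

section Commutator

open scoped ContDiff

variable {E F : Type*} [NormedAddCommGroup E] [NormedSpace ℝ E] [NormedAddCommGroup F]
  [NormedSpace ℝ F]

/-- `M` bounds the `C^{1+α}` norm of `η`, in the form of separate bounds for the supremum norms of
`η` and of its derivative, and for the Hölder seminorm of the derivative. -/
structure C1HolderWith (M α : ℝ) (η : E → F) : Prop where
  differentiable : Differentiable ℝ η
  norm_le : ∀ x, ‖η x‖ ≤ M
  norm_fderiv_le : ∀ x, ‖fderiv ℝ η x‖ ≤ M
  norm_fderiv_sub_le : ∀ x y, ‖fderiv ℝ η x - fderiv ℝ η y‖ ≤ M * ‖x - y‖ ^ α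

namespace C1HolderWith

variable {M α : ℝ} {η : E → F}

theorem nonneg (hη : C1HolderWith M α η) : 0 ≤ M :=
  (norm_nonneg _).trans (hη.norm_le 0)

theorem norm_sub_le (hη : C1HolderWith M α η) (x y : E) : ‖η x - η y‖ ≤ 2 * M := by
  linarith [_root_.norm_sub_le (η x) (η y), hη.norm_le x, hη.norm_le y]

theorem norm_sub_sub_fderiv_le (hη : C1HolderWith M α η) (hα : 0 ≤ α) (x y : E) :
    ‖η x - η y - fderiv ℝ η x (x - y)‖ ≤ M * ‖x - y‖ ^ α * ‖x - y‖ := by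
  have hM := hη.nonneg
  refine (convex_closedBall x ‖x - y‖).norm_image_sub_le_of_norm_fderiv_le' (𝕜 := ℝ)
    (fun w _ => hη.differentiable w) (fun w hw => ?_) ?_
    (Metric.mem_closedBall_self (norm_nonneg _))
  · refine (hη.norm_fderiv_sub_le w x).trans ?_
    gcongr
    exact mem_closedBall_iff_norm.1 hw
  · rw [mem_closedBall_iff_norm, norm_sub_rev]

end C1HolderWith

theorem linearMap_apply_apply_eq_sum_coord {R V W ι κ : Type*} [CommSemiring R] [AddCommMonoid V]
    [Module R V] [AddCommMonoid W] [Module R W] [Fintype ι] [Fintype κ] (b : Module.Basis ι R V)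
    (c : Module.Basis κ R W) (φ : W →ₗ[R] R) (A : V →ₗ[R] W) (z : V) :
    φ (A z) = ∑ q : κ × ι, c.coord q.1 (A (b q.2)) * (b.coord q.2 z * φ (c q.1)) := by
  have expand : ∀ w, φ w = ∑ i, c.coord i w * φ (c i) := fun w => by
    conv_lhs => rw [← c.sum_repr w]
    simp only [map_sum, map_smul, smul_eq_mul, Module.Basis.coord_apply]
  have coord : ∀ i, c.coord i (A z) = ∑ j, b.coord j z * c.coord i (A (b j)) := fun i => by
    conv_lhs => rw [← b.sum_repr z]
    simp only [map_sum, map_smul, smul_eq_mul, Module.Basis.coord_apply]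
  rw [expand, Fintype.sum_prod_type]
  refine Finset.sum_congr rfl fun i _ => ?_
  rw [coord, Finset.sum_mul]
  exact Finset.sum_congr rfl fun j _ => by ring

/-- The kernel `(η x - η y) · ∇k (x - y)` of the commutator. -/
def commKernel (k : E → ℝ) (η : E → E) (x y : E) : ℝ :=
  fderiv ℝ k (x - y) (η x - η y)

/-- The commutator kernel with the increment of `η` replaced, near the diagonal, by its first order
Taylor remainder. -/
def commRemainder (k : E → ℝ) (η : E → E) (x y : E) : ℝ :=
  fderiv ℝ k (x - y) (η x - η y - if ‖x - y‖ ≤ 1 then fderiv ℝ η x (x - y) else 0)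

theorem norm_commRemainder_le {k : E → ℝ} {B : ℝ} (hB : 0 ≤ B)
    (hk : ∀ z, z ≠ 0 → ‖fderiv ℝ k z‖ ≤ B * ‖z‖ ^ (-(Module.finrank ℝ E : ℝ) - 1))
    {M α : ℝ} (hα : 0 ≤ α) {η : E → E} (hη : C1HolderWith M α η) (x y : E) :
    ‖commRemainder k η x y‖ ≤ 2 * B * M * radialMajorant α (x - y) := by
  have hM := hη.nonneg
  rcases eq_or_ne x y with rfl | hxy
  · simp only [commRemainder, sub_self, map_zero, ite_self, norm_zero]
    exact mul_nonneg (by positivity) (radialMajorant_nonneg α 0)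
  have hpos : 0 < ‖x - y‖ := norm_sub_pos_iff.2 hxy
  refine (ContinuousLinearMap.le_opNorm _ _).trans ?_
  unfold radialMajorant
  split_ifs with h
  · calc ‖fderiv ℝ k (x - y)‖ * ‖η x - η y - fderiv ℝ η x (x - y)‖
        ≤ B * ‖x - y‖ ^ (-(Module.finrank ℝ E : ℝ) - 1) * (M * ‖x - y‖ ^ α * ‖x - y‖) := by
          gcongr
          · exact hk _ (norm_pos_iff.1 hpos)
          · exact hη.norm_sub_sub_fderiv_le hα x y
      _ = B * M * ‖x - y‖ ^ (α - Module.finrank ℝ E) := by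
          have exponent : α - Module.finrank ℝ E = -(Module.finrank ℝ E : ℝ) - 1 + α + 1 := by ring
          rw [exponent, rpow_add_one hpos.ne', rpow_add hpos]
          ring
      _ ≤ 2 * (B * M * ‖x - y‖ ^ (α - Module.finrank ℝ E)) :=
          le_mul_of_one_le_left (by positivity) one_le_two
      _ = 2 * B * M * ‖x - y‖ ^ (α - Module.finrank ℝ E) := by ring
  · rw [sub_zero]
    calc ‖fderiv ℝ k (x - y)‖ * ‖η x - η y‖
        ≤ B * ‖x - y‖ ^ (-(Module.finrank ℝ E : ℝ) - 1) * (2 * M) := by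
          gcongr
          · exact hk _ (norm_pos_iff.1 hpos)
          · exact hη.norm_sub_le x y
      _ = 2 * B * M * ‖x - y‖ ^ (-(Module.finrank ℝ E : ℝ) - 1) := by ring

variable {ι : Type*} [Fintype ι]

theorem commKernel_eq_add_sum (k : E → ℝ) (η : E → E) (b : Module.Basis ι ℝ E) (x y : E) :
    commKernel k η x y = commRemainder k η x y +
      ∑ q : ι × ι, b.coord q.1 (fderiv ℝ η x (b q.2)) *
        localConvKernel (fun z => b.coord q.2 z * fderiv ℝ k z (b q.1)) x y := by
  unfold commKernel commRemainder localConvKernel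
  by_cases h : ‖x - y‖ ≤ 1
  · have linear := linearMap_apply_apply_eq_sum_coord b b (fderiv ℝ k (x - y)).toLinearMap
      (fderiv ℝ η x).toLinearMap (x - y)
    simp only [ContinuousLinearMap.coe_coe] at linear
    simp only [if_pos h, indicator_of_mem (mem_closedBall_zero_iff.2 h)]
    rw [← linear, map_sub _ _ (fderiv ℝ η x (x - y)), sub_add_cancel]
  · simp only [if_neg h, indicator_of_notMem (mt mem_closedBall_zero_iff.1 h), sub_zero, mul_zero,
      Finset.sum_const_zero, add_zero]

variable [FiniteDimensional ℝ E]

theorem norm_coord_clm_apply_le (b : Module.Basis ι ℝ E) (A : E →L[ℝ] E) (q : ι × ι) :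
    ‖b.coord q.1 (A (b q.2))‖ ≤
      (∑ p : ι × ι, ‖LinearMap.toContinuousLinearMap (b.coord p.1)‖ * ‖b p.2‖) * ‖A‖ := by
  calc ‖b.coord q.1 (A (b q.2))‖
      ≤ ‖LinearMap.toContinuousLinearMap (b.coord q.1)‖ * (‖A‖ * ‖b q.2‖) :=
        (LinearMap.toContinuousLinearMap (b.coord q.1)).le_opNorm_of_le (A.le_opNorm _)
    _ = ‖LinearMap.toContinuousLinearMap (b.coord q.1)‖ * ‖b q.2‖ * ‖A‖ := by ring
    _ ≤ _ := by
        gcongr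
        exact Finset.single_le_sum
          (f := fun p : ι × ι => ‖LinearMap.toContinuousLinearMap (b.coord p.1)‖ * ‖b p.2‖)
          (fun p _ => by positivity) (Finset.mem_univ q)

variable [MeasurableSpace E] [BorelSpace E]

theorem measurable_commRemainder (k : E → ℝ) {η : E → E} (hη : Measurable η) :
    Measurable (Function.uncurry (commRemainder k η)) := by
  have diff : Measurable fun q : E × E => q.1 - q.2 := measurable_fst.sub measurable_snd
  have linear : Measurable fun q : E × E => fderiv ℝ η q.1 (q.1 - q.2) :=
    ContinuousLinearMap.measurable_apply₂.comp
      (((measurable_fderiv ℝ η).comp measurable_fst).prodMk diff)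
  have vector : Measurable fun q : E × E =>
      η q.1 - η q.2 - if ‖q.1 - q.2‖ ≤ 1 then fderiv ℝ η q.1 (q.1 - q.2) else 0 :=
    ((hη.comp measurable_fst).sub (hη.comp measurable_snd)).sub
      (Measurable.ite (measurableSet_le diff.norm measurable_const) linear measurable_const)
  exact ContinuousLinearMap.measurable_apply₂.comp
    (((measurable_fderiv ℝ k).comp diff).prodMk vector)

variable [Nontrivial E] {μ : Measure E} [μ.IsAddHaarMeasure] {k : E → ℝ} {α : ℝ}

theorem exists_isCZDecomposition_commKernel {n : WithTop ℕ∞} (hk : IsCZKernel μ n k)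
    (hn : 1 ≤ n) (hα : 0 < α) (b : Module.Basis ι ℝ E) :
    ∃ B A, 0 ≤ B ∧ 0 ≤ A ∧ ∀ {M : ℝ} {η : E → E}, C1HolderWith M α η →
      IsCZDecomposition μ (commKernel k η) (commRemainder k η)
        (fun z => B * M * radialMajorant α z)
        (fun (q : ι × ι) x => b.coord q.1 (fderiv ℝ η x (b q.2))) (A * M)
        (fun q z => b.coord q.2 z * fderiv ℝ k z (b q.1)) := by
  obtain ⟨B, hB0, hB⟩ := hk.isPosHomogeneous.fderiv.exists_norm_le
    (hk.contDiffOn.continuousOn_fderiv_of_isOpen isOpen_ne hn)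
  refine ⟨2 * B, ∑ p : ι × ι, ‖LinearMap.toContinuousLinearMap (b.coord p.1)‖ * ‖b p.2‖,
    by positivity, by positivity, fun {M η} hη => ?_⟩
  exact {
    eq := commKernel_eq_add_sum k η b
    measurable_remainder := measurable_commRemainder k hη.differentiable.continuous.measurable
    measurable_majorant := (measurable_radialMajorant α).const_mul _
    integrable_majorant := (integrable_radialMajorant μ hα).const_mul _
    norm_remainder_le := norm_commRemainder_le hB0 hB hα.le hη
    measurable_coeff := fun q =>
      (LinearMap.toContinuousLinearMap (b.coord q.1)).measurable.comp
        (measurable_fderiv_apply_const ℝ η (b q.2))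
    norm_coeff_le := fun q x => (norm_coord_clm_apply_le b _ q).trans (by
      gcongr
      exact hη.norm_fderiv_le x) }

theorem stmt15_general (hk : IsCZKernel μ 2 k) (hα : 0 < α) :
    ∃ C > 0, ∀ (η : E → E) (M : ℝ), C1HolderWith M α η →
      ∀ f : E → ℝ, ContDiff ℝ ∞ f → HasCompactSupport f →
        ∃ Tf : E → ℝ,
          (∀ x, Tendsto (fun ε => truncatedIntegral μ (commKernel k η) f ε x) (𝓝[>] 0)
            (𝓝 (Tf x))) ∧
          eLpNorm Tf 2 μ ≤ ENNReal.ofReal (C * M) * eLpNorm f 2 μ := by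
  set b := Module.finBasis ℝ E
  obtain ⟨B, A, hB, hA, decomp⟩ := exists_isCZDecomposition_commKernel hk one_le_two hα b
  have hm : ∀ q : Fin _ × Fin _, IsCZKernel μ 1 fun z => b.coord q.2 z * fderiv ℝ k z (b q.1) :=
    fun q => IsCZKernel.clm_mul_fderiv (one_add_one_eq_two (R := WithTop ℕ∞) ▸ hk)
      (LinearMap.toContinuousLinearMap (b.coord q.2)) (b q.1)
  obtain ⟨C, hC, bound⟩ := exists_eLpNorm_le_of_isCZDecomposition hm le_rfl
  set I := ∫ z, radialMajorant α z ∂μ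
  have hI : 0 ≤ I := integral_nonneg (radialMajorant_nonneg α)
  refine ⟨B * I + A * C + 1, by positivity, fun η M hη f hf hfc => ?_⟩
  obtain ⟨L, hL⟩ := hf.lipschitzWith_of_hasCompactSupport hfc (by simp)
  choose Tf hTf using (decomp hη).exists_tendsto_truncatedIntegral hm hL hfc
  refine ⟨Tf, hTf, (bound (decomp hη) hf hfc hTf).trans ?_⟩
  gcongr
  rw [integral_const_mul]
  linarith [hη.nonneg]

end Commutator

section Coordinates

theorem setIntegral_annulus_eq_setIntegral_le_norm {E F : Type*} [NormedAddCommGroup E]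
    [NormedSpace ℝ E] [FiniteDimensional ℝ E] [MeasurableSpace E] [BorelSpace E]
    [NormedAddCommGroup F] [NormedSpace ℝ F] (μ : Measure E) [μ.IsAddHaarMeasure] {r : ℝ}
    (hr : 0 < r) (s : ℝ) (f : E → F) :
    ∫ z in annulus E r s, f z ∂μ = ∫ z in {z | r ≤ ‖z‖ ∧ ‖z‖ ≤ s}, f z ∂μ := by
  refine setIntegral_congr_set ?_
  filter_upwards [measure_eq_zero_iff_ae_notMem.1 (Measure.addHaar_sphere_of_ne_zero μ 0 hr.ne')]
    with z hz
  have hzr : r ≠ ‖z‖ := fun h => hz (mem_sphere_zero_iff_norm.2 h.symm)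
  exact propext (and_congr_left' hzr.le_iff_lt.symm)

variable {ι : Type*} [Fintype ι] [DecidableEq ι]

theorem commKernel_eq_sum_single (k : (ι → ℝ) → ℝ) (η : (ι → ℝ) → ι → ℝ) (x y : ι → ℝ) :
    commKernel k η x y = ∑ i, (η x i - η y i) * fderiv ℝ k (x - y) (Pi.single i 1) := by
  rw [commKernel, ← (fderiv ℝ k (x - y)).sum_comp_single]
  refine Finset.sum_congr rfl fun i _ => ?_
  rw [← smul_eq_mul, ← map_smul, ← Pi.single_smul, smul_eq_mul, mul_one]
  rfl

theorem InC1a.c1HolderWith {d : ℕ} {F : Type*} [NormedAddCommGroup F] [NormedSpace ℝ F] {α M : ℝ}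
    {η : Euc d → F} (hη : InC1a α M η) : C1HolderWith M α η :=
  ⟨hη.1, hη.2.1, hη.2.2.1, hη.2.2.2⟩

end Coordinates

/-- `L²` bound in the proof of Lemma `steadycomm`: the operator `T` with
kernel `K(x,y) = (η(x)−η(y))·∇k(x−y)` is bounded on `L²(ℝ^d)`, with norm controlled by
`‖η‖_{C^{1+α}}`. -/
theorem stmt15 (d : ℕ) (hd : 1 ≤ d) (α : ℝ) (hα0 : 0 < α) (hα1 : α < 1)
    (k : Euc d → ℝ)
    (hk_smooth : ContDiffOn ℝ (⊤ : ℕ∞) k {x : Euc d | x ≠ 0})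
    (hk_hom : ∀ c : ℝ, 0 < c → ∀ x : Euc d, x ≠ 0 → k (c • x) = c ^ (-(d : ℝ)) * k x)
    (hk_mean : ∀ r₁ r₂ : ℝ, 0 < r₁ → r₁ ≤ r₂ →
      (∫ z in {z : Euc d | r₁ ≤ ‖z‖ ∧ ‖z‖ ≤ r₂}, k z) = 0) :
    ∃ C > (0 : ℝ), ∀ (η : Euc d → Euc d) (Mη : ℝ), InC1a α Mη η →
      ∀ f : Euc d → ℝ, ContDiff ℝ (⊤ : ℕ∞) f → HasCompactSupport f →
        eLpNorm
            (fun x => limUnder (𝓝[>] (0 : ℝ)) fun ε =>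
              ∫ y in {y : Euc d | ε < ‖x - y‖},
                (∑ i, (η x i - η y i) * fderiv ℝ k (x - y) (Pi.single i 1)) * f y)
            2 volume ≤
          ENNReal.ofReal (C * Mη) * eLpNorm f 2 volume := by
  have : Nonempty (Fin d) := ⟨⟨0, hd⟩⟩
  have cz : IsCZKernel volume 2 k :=
    { contDiffOn := hk_smooth.of_le (WithTop.coe_le_coe.2 (le_top (a := (2 : ℕ∞))))
      isPosHomogeneous := by rwa [Module.finrank_fin_fun]
      setIntegral_annulus := fun r s hr hrs =>
        (setIntegral_annulus_eq_setIntegral_le_norm volume hr s k).trans (hk_mean r s hr hrs) }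
  obtain ⟨C, hC, bound⟩ := stmt15_general cz hα0
  refine ⟨C, hC, fun η M hη f hf hfc => ?_⟩
  obtain ⟨Tf, lim, le⟩ := bound η M hη.c1HolderWith f hf hfc
  simp only [truncatedIntegral, commKernel_eq_sum_single] at lim
  simpa only [(lim _).limUnder_eq] using le

end
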